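/- arXiv:2305.03985 — 9 statements merged into one kernel-verified Lean document; each statement's English description precedes it below -/
import Mathlib

section
/- Let S and S' be finite sets of points in ℝ², let 𝒬 be a finite set of unit squares with S ⊆ ⋃𝒬, and let c ≥ 0 be a real number. For each unit-grid cell □ = [i, i+1) × [j, j+1) (i, j ∈ ℤ), set S_□ = S ∩ □ and 𝒬_□ = {Q ∈ 𝒬 : Q ∩ □ ≠ ∅}, and suppose that 𝒬*_□ ⊆ 𝒬_□ is a set cover of S_□ satisfying memb(S', 𝒬*_□) ≤ c · opt(S_□, S', 𝒬_□). Then the union family ⋃_□ 𝒬*_□ is a set cover of S and memb(S', ⋃_□ 𝒬*_□) ≤ 9c · opt(S, S', 𝒬). -/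
open scoped Classical

/-- The number of sets in the finite family `F` containing the point `p`. -/
noncomputable def memb (p : ℝ × ℝ) (F : Finset (Set (ℝ × ℝ))) : ℕ :=
  (F.filter (fun R => p ∈ R)).card

/-- The membership of a finite point set `S'` with respect to a finite family `F`. -/
noncomputable def membS (S' : Finset (ℝ × ℝ)) (F : Finset (Set (ℝ × ℝ))) : ℕ :=
  S'.sup (fun p => memb p F)

/-- `F` is a set cover of `S`. -/
def IsCover (S : Finset (ℝ × ℝ)) (F : Finset (Set (ℝ × ℝ))) : Prop :=
  ∀ p ∈ S, ∃ R ∈ F, p ∈ R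

/-- The minimum membership of `S'` over all set covers of `S` chosen from `F`. -/
noncomputable def optMemb (S S' : Finset (ℝ × ℝ)) (F : Finset (Set (ℝ × ℝ))) : ℕ :=
  sInf {m : ℕ | ∃ G ⊆ F, IsCover S G ∧ membS S' G = m}

/-- The closed axis-parallel unit square with bottom-left corner `(a, b)`. -/
def unitSquare (a b : ℝ) : Set (ℝ × ℝ) :=
  {p | a ≤ p.1 ∧ p.1 ≤ a + 1 ∧ b ≤ p.2 ∧ p.2 ≤ b + 1}

/-- The half-open unit grid cell `[i, i+1) × [j, j+1)`. -/
def gridCell (i j : ℤ) : Set (ℝ × ℝ) :=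
  {p | (i : ℝ) ≤ p.1 ∧ p.1 < (i : ℝ) + 1 ∧ (j : ℝ) ≤ p.2 ∧ p.2 < (j : ℝ) + 1}

theorem memb_mono' (p : ℝ × ℝ) {F G : Finset (Set (ℝ × ℝ))} (h : F ⊆ G) : memb p F ≤ memb p G :=
  Finset.card_le_card (Finset.filter_subset_filter _ h)

theorem membS_mono' (S' : Finset (ℝ × ℝ)) {F G : Finset (Set (ℝ × ℝ))} (h : F ⊆ G) :
    membS S' F ≤ membS S' G :=
  Finset.sup_mono_fun (fun p _ => memb_mono' p h)

theorem optMemb_local (S S' : Finset (ℝ × ℝ)) (Q : Finset (Set (ℝ × ℝ))) (hcov : IsCover S Q)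
    (i j : ℤ) :
    optMemb (S.filter (fun p => p ∈ gridCell i j)) S'
      (Q.filter (fun R => (R ∩ gridCell i j).Nonempty)) ≤ optMemb S S' Q := by
  have hne : {m : ℕ | ∃ G ⊆ Q, IsCover S G ∧ membS S' G = m}.Nonempty :=
    ⟨_, Q, Finset.Subset.refl _, hcov, rfl⟩
  obtain ⟨G, hG, hGc, hGm⟩ := Nat.sInf_mem hne
  have h1 : optMemb S S' Q = membS S' G := hGm.symm
  rw [h1]
  refine le_trans (Nat.sInf_le
    ⟨G.filter (fun R => (R ∩ gridCell i j).Nonempty), Finset.filter_subset_filter _ hG, ?_, rfl⟩)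
    (membS_mono' S' (Finset.filter_subset _ _))
  intro p hp
  rw [Finset.mem_filter] at hp
  obtain ⟨R, hR, hpR⟩ := hGc p hp.1
  exact ⟨R, Finset.mem_filter.2 ⟨hR, p, hpR, hp.2⟩, hpR⟩

theorem coord_near {a x y : ℝ} {i : ℤ} (h1 : a ≤ x) (h2 : x ≤ a + 1) (h3 : a ≤ y) (h4 : y ≤ a + 1)
    (h5 : (i : ℝ) ≤ y) (h6 : y < i + 1) : i ∈ Finset.Icc (⌊x⌋ - 1) (⌊x⌋ + 1) := by
  have e1 := Int.floor_le x
  have e2 := Int.lt_floor_add_one x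
  have a1 : ((⌊x⌋ : ℤ) : ℝ) < ((i + 2 : ℤ) : ℝ) := by push_cast; linarith
  have a2 : (i : ℝ) < ((⌊x⌋ + 2 : ℤ) : ℝ) := by push_cast; linarith
  have b1 := Int.cast_lt.1 a1
  have b2 := Int.cast_lt.1 a2
  rw [Finset.mem_Icc]
  omega

theorem stmt0 (S S' : Finset (ℝ × ℝ)) (Q : Finset (Set (ℝ × ℝ)))
    (hsq : ∀ R ∈ Q, ∃ a b : ℝ, R = unitSquare a b)
    (hcov : IsCover S Q) (c : ℝ) (hc : 0 ≤ c)
    (Qstar : ℤ → ℤ → Finset (Set (ℝ × ℝ)))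
    (hsub : ∀ i j : ℤ, Qstar i j ⊆ Q.filter (fun R => (R ∩ gridCell i j).Nonempty))
    (hcovloc : ∀ i j : ℤ, IsCover (S.filter (fun p => p ∈ gridCell i j)) (Qstar i j))
    (hmemb : ∀ i j : ℤ, (membS S' (Qstar i j) : ℝ) ≤
      c * (optMemb (S.filter (fun p => p ∈ gridCell i j)) S'
            (Q.filter (fun R => (R ∩ gridCell i j).Nonempty)) : ℕ)) :
    IsCover S (Q.filter (fun R => ∃ i j : ℤ, R ∈ Qstar i j)) ∧
    (membS S' (Q.filter (fun R => ∃ i j : ℤ, R ∈ Qstar i j)) : ℝ) ≤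
      9 * c * (optMemb S S' Q : ℕ) := by
  constructor
  · intro p hp
    have hcell : p ∈ gridCell ⌊p.1⌋ ⌊p.2⌋ :=
      ⟨Int.floor_le _, Int.lt_floor_add_one _, Int.floor_le _, Int.lt_floor_add_one _⟩
    obtain ⟨R, hR, hpR⟩ := hcovloc ⌊p.1⌋ ⌊p.2⌋ p (Finset.mem_filter.2 ⟨hp, hcell⟩)
    exact ⟨R, Finset.mem_filter.2 ⟨(Finset.mem_filter.1 (hsub _ _ hR)).1, _, _, hR⟩, hpR⟩
  · have hpos : (0 : ℝ) ≤ 9 * c * (optMemb S S' Q : ℕ) := by positivity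
    have key : ∀ p ∈ S', (memb p (Q.filter (fun R => ∃ i j : ℤ, R ∈ Qstar i j)) : ℝ) ≤
        9 * c * (optMemb S S' Q : ℕ) := by
      intro p hp
      set T := Finset.Icc (⌊p.1⌋ - 1) (⌊p.1⌋ + 1) ×ˢ Finset.Icc (⌊p.2⌋ - 1) (⌊p.2⌋ + 1) with hT
      have hTc : T.card = 9 := by
        rw [hT, Finset.card_product, Int.card_Icc, Int.card_Icc]
        have e1 : (⌊p.1⌋ + 1 + 1 - (⌊p.1⌋ - 1)) = 3 := by ring
        have e2 : (⌊p.2⌋ + 1 + 1 - (⌊p.2⌋ - 1)) = 3 := by ring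
        rw [e1, e2]
        rfl
      have hle : memb p (Q.filter (fun R => ∃ i j : ℤ, R ∈ Qstar i j)) ≤
          ∑ t ∈ T, memb p (Qstar t.1 t.2) := by
        unfold memb
        refine le_trans (Finset.card_le_card ?_) Finset.card_biUnion_le
        intro R hR
        simp only [Finset.mem_filter] at hR
        obtain ⟨⟨hRQ, i, j, hij⟩, hpR⟩ := hR
        obtain ⟨q, hqR, hqc⟩ := (Finset.mem_filter.1 (hsub i j hij)).2
        rw [Finset.mem_biUnion]
        refine ⟨(i, j), ?_, Finset.mem_filter.2 ⟨hij, hpR⟩⟩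
        obtain ⟨a, b, rfl⟩ := hsq R hRQ
        obtain ⟨p1, p2, p3, p4⟩ := hpR
        obtain ⟨q1, q2, q3, q4⟩ := hqR
        obtain ⟨c1, c2, c3, c4⟩ := hqc
        exact Finset.mem_product.2
          ⟨coord_near p1 p2 q1 q2 c1 c2, coord_near p3 p4 q3 q4 c3 c4⟩
      have hloc : ∀ t ∈ T, (memb p (Qstar t.1 t.2) : ℝ) ≤ c * (optMemb S S' Q : ℕ) := by
        intro t _
        have h1 : memb p (Qstar t.1 t.2) ≤ membS S' (Qstar t.1 t.2) :=
          Finset.le_sup (f := fun p => memb p (Qstar t.1 t.2)) hp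
        have h2 := optMemb_local S S' Q hcov t.1 t.2
        calc (memb p (Qstar t.1 t.2) : ℝ) ≤ (membS S' (Qstar t.1 t.2) : ℝ) := by exact_mod_cast h1
          _ ≤ _ := hmemb t.1 t.2
          _ ≤ _ := mul_le_mul_of_nonneg_left (by exact_mod_cast h2) hc
      calc (memb p (Q.filter (fun R => ∃ i j : ℤ, R ∈ Qstar i j)) : ℝ)
          ≤ ((∑ t ∈ T, memb p (Qstar t.1 t.2) : ℕ) : ℝ) := by exact_mod_cast hle
        _ = ∑ t ∈ T, (memb p (Qstar t.1 t.2) : ℝ) := by push_cast; rfl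
        _ ≤ T.card • (c * (optMemb S S' Q : ℕ)) := Finset.sum_le_card_nsmul _ _ _ hloc
        _ = 9 * c * (optMemb S S' Q : ℕ) := by rw [hTc, nsmul_eq_mul]; push_cast; ring
    have hfl : membS S' (Q.filter (fun R => ∃ i j : ℤ, R ∈ Qstar i j)) ≤
        ⌊9 * c * ((optMemb S S' Q : ℕ) : ℝ)⌋₊ :=
      Finset.sup_le (fun p hp => Nat.le_floor (key p hp))
    exact (Nat.le_floor_iff hpos).1 hfl
end

section
/- Let □ = [c_x, c_x+1] × [c_y, c_y+1] be a closed unit cell with bottom-left corner c = (c_x, c_y). Let 𝒬 be a finite set of unit squares each containing c, let S_0 ⊆ □ be a finite set of points with S_0 ⊆ ⋃𝒬, and let 𝒬_0 ⊆ 𝒬 be a minimum-size set cover of S_0 (i.e., |𝒬_0| ≤ |ℛ| for every set cover ℛ ⊆ 𝒬 of S_0). Then every fractional set cover x̂ of S_0 by 𝒬 satisfies Σ_{Q ∈ 𝒬} x̂(Q) ≥ |𝒬_0|. -/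
open scoped Classical

/-- `x` is a fractional set cover of `A` by the finite family `F`. -/
def IsFracCover (A : Finset (ℝ × ℝ)) (F : Finset (Set (ℝ × ℝ))) (x : Set (ℝ × ℝ) → ℝ) : Prop :=
  (∀ R ∈ F, 0 ≤ x R ∧ x R ≤ 1) ∧
  ∀ a ∈ A, 1 ≤ ∑ R ∈ F.filter (fun R => a ∈ R), x R

/-- The fractional membership of a point `p` with respect to `x`. -/
noncomputable def membFracP (p : ℝ × ℝ) (F : Finset (Set (ℝ × ℝ))) (x : Set (ℝ × ℝ) → ℝ) : ℝ :=
  ∑ R ∈ F.filter (fun R => p ∈ R), x R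

/-- The fractional membership of a finite point set `A'` with respect to `x`. -/
noncomputable def membFrac (A' : Finset (ℝ × ℝ)) (F : Finset (Set (ℝ × ℝ)))
    (x : Set (ℝ × ℝ) → ℝ) : ℝ :=
  ⨆ p ∈ A', membFracP p F x

theorem greedy_aux (cx cy : ℝ) (Q : Finset (Set (ℝ × ℝ))) (a b : Set (ℝ × ℝ) → ℝ)
    (hab : ∀ R ∈ Q, ∀ p ∈ unitSquare cx cy, (p ∈ R ↔ p.1 ≤ a R ∧ p.2 ≤ b R)) :
    ∀ (n : ℕ) (S : Finset (ℝ × ℝ)), S.card ≤ n → (∀ p ∈ S, p ∈ unitSquare cx cy) →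
      IsCover S Q → ∃ G ⊆ Q, IsCover S G ∧ ∃ I ⊆ S, G.card ≤ I.card ∧
        ∀ R ∈ Q, ∀ p ∈ I, ∀ q ∈ I, p ∈ R → q ∈ R → p = q := by
  intro n
  induction n with
  | zero =>
    intro S hS _ _
    have : S = ∅ := by simpa using hS
    subst this
    exact ⟨∅, by simp, by intro p hp; simp at hp, ∅, by simp, by simp, by simp⟩
  | succ n ih =>
    intro S hS hcell hcov
    rcases S.eq_empty_or_nonempty with rfl | hne
    · exact ⟨∅, by simp, by intro p hp; simp at hp, ∅, by simp, by simp, by simp⟩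
    obtain ⟨p, hpS, hpmax⟩ := S.exists_max_image (fun p => p.2) hne
    obtain ⟨R0, hR0, hpR0⟩ := hcov p hpS
    obtain ⟨R, hR, hRmax⟩ := (Q.filter (fun R => p ∈ R)).exists_max_image a
      ⟨R0, by simp [hR0, hpR0]⟩
    rw [Finset.mem_filter] at hR
    obtain ⟨hRQ, hpR⟩ := hR
    have hpab := (hab R hRQ p (hcell p hpS)).1 hpR
    have hpn : p ∉ S.filter (fun q => a R < q.1) := by
      simp only [Finset.mem_filter, not_and, not_lt]
      exact fun _ => hpab.1
    have hlt : (S.filter (fun q => a R < q.1)).card < S.card :=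
      Finset.card_lt_card (Finset.ssubset_iff_subset_ne.2
        ⟨Finset.filter_subset _ _, fun h => hpn (h.symm.subset hpS)⟩)
    obtain ⟨G, hGQ, hGc, I, hIS, hGI, hI⟩ := ih (S.filter (fun q => a R < q.1)) (by omega)
      (fun q hq => hcell q (Finset.mem_filter.1 hq).1)
      (fun q hq => hcov q (Finset.mem_filter.1 hq).1)
    have key : ∀ R' ∈ Q, ∀ q ∈ I, p ∈ R' → q ∈ R' → False := by
      intro R' hR' q hq hpR' hqR'
      have hq' := Finset.mem_filter.1 (hIS hq)
      have h1 := hRmax R' (by simp [hR', hpR'])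
      have h2 := ((hab R' hR' q (hcell q hq'.1)).1 hqR').1
      linarith [hq'.2]
    refine ⟨insert R G, ?_, ?_, insert p I, ?_, ?_, ?_⟩
    · exact Finset.insert_subset hRQ hGQ
    · intro q hq
      by_cases h : a R < q.1
      · obtain ⟨T, hT, hqT⟩ := hGc q (Finset.mem_filter.2 ⟨hq, h⟩)
        exact ⟨T, Finset.mem_insert_of_mem hT, hqT⟩
      · exact ⟨R, Finset.mem_insert_self _ _, (hab R hRQ q (hcell q hq)).2
          ⟨not_lt.1 h, (hpmax q hq).trans hpab.2⟩⟩
    · exact Finset.insert_subset hpS (hIS.trans (Finset.filter_subset _ _))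
    · rw [Finset.card_insert_of_notMem (fun h => hpn (hIS h))]
      exact (Finset.card_insert_le _ _).trans (by omega)
    · intro R' hR' u hu v hv huR hvR
      rcases Finset.mem_insert.1 hu with rfl | hu2 <;> rcases Finset.mem_insert.1 hv with rfl | hv2
      · rfl
      · exact (key R' hR' v hv2 huR hvR).elim
      · exact (key R' hR' u hu2 hvR huR).elim
      · exact hI R' hR' u hu2 v hv2 huR hvR

theorem stmt3 (cx cy : ℝ) (Q : Finset (Set (ℝ × ℝ)))
    (hsq : ∀ R ∈ Q, (∃ a b : ℝ, R = unitSquare a b) ∧ (cx, cy) ∈ R)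
    (S0 : Finset (ℝ × ℝ)) (hS0 : ∀ p ∈ S0, p ∈ unitSquare cx cy)
    (hcov : IsCover S0 Q)
    (Q0 : Finset (Set (ℝ × ℝ))) (hQ0sub : Q0 ⊆ Q) (hQ0cov : IsCover S0 Q0)
    (hQ0min : ∀ G ⊆ Q, IsCover S0 G → Q0.card ≤ G.card)
    (x : Set (ℝ × ℝ) → ℝ) (hx : IsFracCover S0 Q x) :
    (Q0.card : ℝ) ≤ ∑ R ∈ Q, x R := by
  have h0 : ∀ R : Set (ℝ × ℝ), ∃ a b : ℝ, R ∈ Q →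
      ∀ p ∈ unitSquare cx cy, (p ∈ R ↔ p.1 ≤ a ∧ p.2 ≤ b) := by
    intro R
    by_cases hR : R ∈ Q
    · obtain ⟨⟨a, b, rfl⟩, hc⟩ := hsq R hR
      refine ⟨a + 1, b + 1, fun _ p hp => ?_⟩
      simp only [unitSquare, Set.mem_ofPred_eq] at hc hp ⊢
      constructor
      · rintro ⟨_, h1, _, h2⟩
        exact ⟨h1, h2⟩
      · rintro ⟨h1, h2⟩
        exact ⟨by linarith [hc.1, hp.1], h1, by linarith [hc.2.2.1, hp.2.2.1], h2⟩
    · exact ⟨0, 0, fun h => (hR h).elim⟩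
  choose a b hab using h0
  obtain ⟨G, hGQ, hGc, I, hIS, hGI, hI⟩ := greedy_aux cx cy Q a b hab S0.card S0 le_rfl hS0 hcov
  have h1 : (Q0.card : ℝ) ≤ I.card := by exact_mod_cast (hQ0min G hGQ hGc).trans hGI
  have h2 : (I.card : ℝ) ≤ ∑ p ∈ I, ∑ R ∈ Q.filter (fun R => p ∈ R), x R := by
    have := Finset.sum_le_sum (fun p (hp : p ∈ I) => hx.2 p (hIS hp))
    simpa using this
  refine h1.trans (h2.trans ?_)
  simp_rw [Finset.sum_filter]
  rw [Finset.sum_comm]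
  refine Finset.sum_le_sum fun R hR => ?_
  rw [← Finset.sum_filter, Finset.sum_const, nsmul_eq_mul]
  have hc : (I.filter (fun p => p ∈ R)).card ≤ 1 := by
    rw [Finset.card_le_one]
    intro u hu v hv
    rw [Finset.mem_filter] at hu hv
    exact hI R hR u hu.1 v hv.1 hu.2 hv.2
  have hc' : ((I.filter (fun p => p ∈ R)).card : ℝ) ≤ 1 := by exact_mod_cast hc
  exact mul_le_of_le_one_left (hx.1 R hR).1 hc'
end

section
/- Let ℛ be a finite irreducible family of halfplanes with ⋃ℛ ≠ ℝ². Then for every H ∈ ℛ and every halfplane H' with H' ≠ H, we have ⋃ℛ ≠ ⋃ℛ', where ℛ' = (ℛ \ {H}) ∪ {H'}. -/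
open scoped Classical

/-- The halfplane with inward normal `v` and offset `c`: `{p : ⟨p, v⟩ ≥ c}`. -/
def halfplane (v : ℝ × ℝ) (c : ℝ) : Set (ℝ × ℝ) :=
  {p | c ≤ v.1 * p.1 + v.2 * p.2}

/-- `H` is a halfplane (for some unit inward normal). -/
def IsHalfplane (H : Set (ℝ × ℝ)) : Prop :=
  ∃ v : ℝ × ℝ, ∃ c : ℝ, v.1 ^ 2 + v.2 ^ 2 = 1 ∧ H = halfplane v c

/-- `H` is redundant in the finite family `R`. -/
def Redundant (R : Finset (Set (ℝ × ℝ))) (H : Set (ℝ × ℝ)) : Prop :=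
  ⋃₀ (R : Set (Set (ℝ × ℝ))) = ⋃₀ ((R.erase H : Finset (Set (ℝ × ℝ))) : Set (Set (ℝ × ℝ)))

/-- The finite family `R` is irreducible: no member is redundant. -/
def IrreducibleFam (R : Finset (Set (ℝ × ℝ))) : Prop :=
  ∀ H ∈ R, ¬ Redundant R H

/-- The clockwise ordered angle from `u` to `v`, i.e. the unique `θ ∈ [0, 2π)` such that
rotating `u` clockwise by `θ` yields `v` (for nonzero vectors of equal norm). -/
noncomputable def ang (u v : ℝ × ℝ) : ℝ :=
  let a := Complex.arg ((Complex.ofReal u.1 + Complex.ofReal u.2 * Complex.I) /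
      (Complex.ofReal v.1 + Complex.ofReal v.2 * Complex.I))
  if a < 0 then a + 2 * Real.pi else a

theorem aux_local (C : Set (ℝ × ℝ)) (hC : IsOpen C) (v v' r : ℝ × ℝ) (c c' : ℝ)
    (hv : v.1 ^ 2 + v.2 ^ 2 = 1) (hv' : v'.1 ^ 2 + v'.2 ^ 2 = 1) (hr : r ∈ C)
    (hrc : v.1 * r.1 + v.2 * r.2 = c)
    (h : ∀ x ∈ C, x ∈ halfplane v c ↔ x ∈ halfplane v' c') :
    halfplane v' c' = halfplane v c := by
  obtain ⟨ε, hε, hb⟩ := Metric.isOpen_iff.1 hC r hr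
  have key : ∀ a b s : ℝ, a ^ 2 + b ^ 2 = 1 → 0 < s → s < ε →
      (0 ≤ s * (v.1 * a + v.2 * b) ↔
        c' ≤ v'.1 * r.1 + v'.2 * r.2 + s * (v'.1 * a + v'.2 * b)) := by
    intro a b s hab hs hsε
    have ha : |a| ≤ 1 := abs_le_one_iff_mul_self_le_one.2 (by nlinarith)
    have hb' : |b| ≤ 1 := abs_le_one_iff_mul_self_le_one.2 (by nlinarith)
    have hx : ((r.1 + s * a, r.2 + s * b) : ℝ × ℝ) ∈ C := by
      apply hb
      rw [Metric.mem_ball, Prod.dist_eq, max_lt_iff]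
      simp only [Real.dist_eq, add_sub_cancel_left, abs_mul, abs_of_pos hs]
      constructor <;> nlinarith
    have := h _ hx
    simp only [halfplane, Set.mem_ofPred_eq] at this
    constructor
    · intro h1
      have := this.1 (by linarith)
      linarith
    · intro h1
      have := this.2 (by linarith)
      linarith
  have hA : c' ≤ v'.1 * r.1 + v'.2 * r.2 := (h r hr).1 (le_of_eq hrc.symm)
  have hneg : ∀ s : ℝ, 0 < s → s < ε →
      v'.1 * r.1 + v'.2 * r.2 - s * (v'.1 * v.1 + v'.2 * v.2) < c' := by
    intro s hs hsε
    by_contra hcon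
    push Not at hcon
    have := (key (-v.1) (-v.2) s (by linarith) hs hsε).2 (by linarith)
    have h2 : s * (v.1 * -v.1 + v.2 * -v.2) = -s := by linear_combination (-s) * hv
    linarith
  have hl1 : v'.1 * v.1 + v'.2 * v.2 ≤ 1 := by
    nlinarith [sq_nonneg (v.1 - v'.1), sq_nonneg (v.2 - v'.2)]
  have hA0 : c' = v'.1 * r.1 + v'.2 * r.2 := by
    apply le_antisymm hA
    by_contra hcon
    push Not at hcon
    have hs : 0 < min (ε / 2) (v'.1 * r.1 + v'.2 * r.2 - c') := lt_min (by linarith) (by linarith)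
    have h1 := hneg _ hs (lt_of_le_of_lt (min_le_left _ _) (by linarith))
    have h2 := min_le_right (ε / 2) (v'.1 * r.1 + v'.2 * r.2 - c')
    have h3 := mul_le_mul_of_nonneg_left hl1 hs.le
    linarith
  have hl0 : 0 < v'.1 * v.1 + v'.2 * v.2 := by
    have := hneg (ε / 2) (by linarith) (by linarith)
    have h2 : 0 < (ε / 2) * (v'.1 * v.1 + v'.2 * v.2) := by linarith
    exact (mul_pos_iff_of_pos_left (by linarith)).1 h2
  have hp1 := (key (-v.2) v.1 (ε / 2) (by linarith) (by linarith) (by linarith)).1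
    (le_of_eq (by ring))
  have hp2 := (key v.2 (-v.1) (ε / 2) (by linarith) (by linarith) (by linarith)).1
    (le_of_eq (by ring))
  have hw : v'.1 * v.2 - v'.2 * v.1 = 0 := by
    have : (ε / 2) * (v'.1 * v.2 - v'.2 * v.1) = 0 := by apply le_antisymm <;> linarith
    rcases mul_eq_zero.1 this with h | h
    · linarith
    · exact h
  have hl : v'.1 * v.1 + v'.2 * v.2 = 1 := by
    have : (v'.1 * v.1 + v'.2 * v.2) ^ 2 = 1 := by
      linear_combination (v'.1 ^ 2 + v'.2 ^ 2) * hv + hv' - (v'.1 * v.2 - v'.2 * v.1) * hw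
    nlinarith
  have e1 : v'.1 = v.1 := by linear_combination v.1 * hl + v.2 * hw - v'.1 * hv
  have e2 : v'.2 = v.2 := by linear_combination v.2 * hl - v.1 * hw - v'.2 * hv
  have e3 : c' = c := by rw [hA0, ← hrc, e1, e2]
  rw [Prod.ext e1 e2, e3]

theorem aux_closed (H : Set (ℝ × ℝ)) (h : IsHalfplane H) : IsClosed H := by
  obtain ⟨v, c, -, rfl⟩ := h
  exact isClosed_le (by fun_prop) (by fun_prop)

theorem stmt6 (R : Finset (Set (ℝ × ℝ))) (hhp : ∀ H ∈ R, IsHalfplane H)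
    (hirr : IrreducibleFam R) (hne : ⋃₀ (R : Set (Set (ℝ × ℝ))) ≠ Set.univ) :
    ∀ H ∈ R, ∀ H' : Set (ℝ × ℝ), IsHalfplane H' → H' ≠ H →
      ⋃₀ (R : Set (Set (ℝ × ℝ))) ≠
        ⋃₀ ((insert H' (R.erase H) : Finset (Set (ℝ × ℝ))) : Set (Set (ℝ × ℝ))) := by
  intro H hH H' hH' hne' heq
  apply hne'
  have hclosed : IsClosed (⋃₀ ((R.erase H : Finset (Set (ℝ × ℝ))) : Set (Set (ℝ × ℝ)))) := by
    rw [Set.sUnion_eq_biUnion]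
    exact Set.Finite.isClosed_biUnion (Finset.finite_toSet _)
      (fun G hG => aux_closed G (hhp G (Finset.mem_of_mem_erase hG)))
  have hRH : ⋃₀ (R : Set (Set (ℝ × ℝ))) =
      H ∪ ⋃₀ ((R.erase H : Finset (Set (ℝ × ℝ))) : Set (Set (ℝ × ℝ))) := by
    rw [← Set.sUnion_insert, ← Finset.coe_insert, Finset.insert_erase hH]
  rw [Finset.coe_insert, Set.sUnion_insert] at heq
  have hred : ¬ (⋃₀ (R : Set (Set (ℝ × ℝ))) =
      ⋃₀ ((R.erase H : Finset (Set (ℝ × ℝ))) : Set (Set (ℝ × ℝ)))) := hirr H hH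
  have hconv : ∀ p q : ℝ × ℝ, ∀ t : ℝ, 0 ≤ t → t ≤ 1 →
      p ∉ ⋃₀ ((R.erase H : Finset (Set (ℝ × ℝ))) : Set (Set (ℝ × ℝ))) →
      q ∉ ⋃₀ ((R.erase H : Finset (Set (ℝ × ℝ))) : Set (Set (ℝ × ℝ))) →
      ((t * p.1 + (1 - t) * q.1, t * p.2 + (1 - t) * q.2) : ℝ × ℝ) ∉
        ⋃₀ ((R.erase H : Finset (Set (ℝ × ℝ))) : Set (Set (ℝ × ℝ))) := by
    rintro p q t h0 h1 hp hq ⟨G, hG, hm⟩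
    have hpG : p ∉ G := fun h => hp ⟨G, hG, h⟩
    have hqG : q ∉ G := fun h => hq ⟨G, hG, h⟩
    obtain ⟨w, d, -, rfl⟩ := hhp G (Finset.mem_of_mem_erase hG)
    simp only [halfplane, Set.mem_ofPred_eq, not_le] at hpG hqG hm
    rcases h0.eq_or_lt with rfl | h0
    · linarith
    · have a1 := mul_lt_mul_of_pos_left hpG h0
      have a2 := mul_le_mul_of_nonneg_left hqG.le (sub_nonneg.2 h1)
      linarith
  generalize ⋃₀ ((R.erase H : Finset (Set (ℝ × ℝ))) : Set (Set (ℝ × ℝ))) = U at *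
  rw [hRH] at heq hne hred
  have hiff : ∀ x ∈ Uᶜ, x ∈ H ↔ x ∈ H' := by
    intro x hx
    have : x ∈ H ∪ U ↔ x ∈ H' ∪ U := by rw [heq]
    have hx' : x ∉ U := hx
    rw [Set.mem_union, Set.mem_union] at this
    tauto
  obtain ⟨p, hpH, hpU⟩ : ∃ p, p ∈ H ∧ p ∉ U := by
    by_contra hcon
    push Not at hcon
    exact hred (Set.union_eq_right.2 hcon)
  obtain ⟨q, hq⟩ := (Set.ne_univ_iff_exists_notMem _).1 hne
  have hqH : q ∉ H := fun h => hq (Or.inl h)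
  have hqU : q ∉ U := fun h => hq (Or.inr h)
  obtain ⟨v, c, hv, rfl⟩ := hhp H hH
  obtain ⟨v', c', hv', rfl⟩ := hH'
  have hpH' : c ≤ v.1 * p.1 + v.2 * p.2 := hpH
  have hqH' : v.1 * q.1 + v.2 * q.2 < c := not_le.1 hqH
  have hD : 0 < (v.1 * p.1 + v.2 * p.2) - (v.1 * q.1 + v.2 * q.2) := by linarith
  obtain ⟨t, ht⟩ : ∃ t, t = (c - (v.1 * q.1 + v.2 * q.2)) /
      ((v.1 * p.1 + v.2 * p.2) - (v.1 * q.1 + v.2 * q.2)) := ⟨_, rfl⟩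
  have ht0 : 0 ≤ t := by rw [ht]; exact div_nonneg (by linarith) hD.le
  have ht1 : t ≤ 1 := by rw [ht, div_le_one hD]; linarith
  have htm := (eq_div_iff hD.ne').1 ht
  exact aux_local Uᶜ hclosed.isOpen_compl v v' _ c c' hv hv'
    (hconv p q t ht0 ht1 hpU hqU) (by linear_combination htm) hiff
end

section
/- Let ℛ be a finite nonempty irreducible family of halfplanes with ⋃ℛ ≠ ℝ² and ⋂ℛ ≠ ∅. Then ℛ can be enumerated as H_1, H_2, …, H_t (where t = |ℛ|) such that 0 < ang(H_1, H_2) < ang(H_1, H_3) < ⋯ < ang(H_1, H_t) < π. -/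
open scoped Classical

/-- complex number of a vector -/
noncomputable def cpx7 (u : ℝ × ℝ) : ℂ := Complex.ofReal u.1 + Complex.ofReal u.2 * Complex.I

lemma cpx7_re (u : ℝ × ℝ) : (cpx7 u).re = u.1 := by simp [cpx7]
lemma cpx7_im (u : ℝ × ℝ) : (cpx7 u).im = u.2 := by simp [cpx7]

lemma ang7_eq (d : ℂ) (u v : ℝ × ℝ) (hd : d ≠ 0)
    (hu : 0 < (d / cpx7 u).re) (hv : 0 < (d / cpx7 v).re)
    (h : Complex.arg (d / cpx7 u) < Complex.arg (d / cpx7 v)) :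
    ang u v = Complex.arg (d / cpx7 v) - Complex.arg (d / cpx7 u) ∧
      Complex.arg (d / cpx7 v) - Complex.arg (d / cpx7 u) < Real.pi := by
  have hu0 : cpx7 u ≠ 0 := by rintro h0; simp [h0] at hu
  have hv0 : cpx7 v ≠ 0 := by rintro h0; simp [h0] at hv
  have au := abs_lt.1 (Complex.abs_arg_lt_pi_div_two_iff.2 (Or.inl hu))
  have av := abs_lt.1 (Complex.abs_arg_lt_pi_div_two_iff.2 (Or.inl hv))
  have e : cpx7 u / cpx7 v = (d / cpx7 v) * (d / cpx7 u)⁻¹ := by field_simp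
  have ai : Complex.arg (d / cpx7 u)⁻¹ = - Complex.arg (d / cpx7 u) := by
    rw [Complex.arg_inv, if_neg]
    intro h; linarith [Real.pi_pos, au.2]
  have a : Complex.arg (cpx7 u / cpx7 v) =
      Complex.arg (d / cpx7 v) - Complex.arg (d / cpx7 u) := by
    rw [e, Complex.arg_mul (div_ne_zero hd hv0) (inv_ne_zero (div_ne_zero hd hu0)), ai, sub_eq_add_neg]
    rw [ai]; constructor <;> linarith [au.1, au.2, av.1, av.2]
  refine ⟨?_, by linarith [au.1, au.2, av.1, av.2]⟩
  rw [← a]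
  unfold ang
  change (if Complex.arg (cpx7 u / cpx7 v) < 0 then _ else Complex.arg (cpx7 u / cpx7 v)) = _
  rw [if_neg]
  rw [a]; linarith

lemma redundant7 (R : Finset (Set (ℝ × ℝ))) (H K : Set (ℝ × ℝ)) (hK : K ∈ R)
    (hne : H ≠ K) (hs : H ⊆ K) : Redundant R H := by
  unfold Redundant
  ext p
  simp only [Set.mem_sUnion, Finset.mem_coe, Finset.mem_erase]
  constructor
  · rintro ⟨L, hL, hp⟩
    by_cases h : L = H
    · exact ⟨K, ⟨hne.symm, hK⟩, hs (h ▸ hp)⟩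
    · exact ⟨L, ⟨h, hL⟩, hp⟩
  · rintro ⟨L, ⟨_, hL⟩, hp⟩
    exact ⟨L, hL, hp⟩

lemma re_pos7 (d v : ℝ × ℝ) (h : 0 < v.1 * d.1 + v.2 * d.2) (hv : v.1 ^ 2 + v.2 ^ 2 = 1) :
    0 < (cpx7 d / cpx7 v).re := by
  have : Complex.normSq (cpx7 v) = 1 := by
    rw [Complex.normSq_apply, cpx7_re, cpx7_im, ← hv]; ring
  rw [Complex.div_re, this, cpx7_re, cpx7_im, cpx7_re, cpx7_im]
  linarith

lemma inj7 (d u v : ℝ × ℝ) (hd : cpx7 d ≠ 0) (hu : u.1 ^ 2 + u.2 ^ 2 = 1)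
    (hv : v.1 ^ 2 + v.2 ^ 2 = 1)
    (h : Complex.arg (cpx7 d / cpx7 u) = Complex.arg (cpx7 d / cpx7 v)) : u = v := by
  have n : ∀ w : ℝ × ℝ, w.1 ^ 2 + w.2 ^ 2 = 1 → ‖cpx7 w‖ = 1 := by
    intro w hw
    have : Complex.normSq (cpx7 w) = 1 := by
      rw [Complex.normSq_apply, cpx7_re, cpx7_im, ← hw]; ring
    rw [Complex.normSq_eq_norm_sq] at this
    nlinarith [norm_nonneg (cpx7 w)]
  have e : cpx7 d / cpx7 u = cpx7 d / cpx7 v := by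
    apply Complex.ext_norm_arg _ h
    rw [norm_div, norm_div, n u hu, n v hv]
  have e2 : cpx7 u = cpx7 v := by
    have := congrArg (fun z => (z / cpx7 d)⁻¹) e
    simpa [div_div_cancel_left', hd, div_div, div_eq_mul_inv, mul_comm, mul_left_comm] using this
  ext
  · rw [← cpx7_re, e2, cpx7_re]
  · rw [← cpx7_im, e2, cpx7_im]

theorem stmt7 (R : Finset (Set (ℝ × ℝ))) (hhp : ∀ H ∈ R, IsHalfplane H)
    (hne : R.Nonempty) (hirr : IrreducibleFam R)
    (hcov : ⋃₀ (R : Set (Set (ℝ × ℝ))) ≠ Set.univ)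
    (hint : (⋂₀ (R : Set (Set (ℝ × ℝ)))).Nonempty) :
    ∃ (t : ℕ) (ht : 0 < t) (v : Fin t → ℝ × ℝ) (c : Fin t → ℝ),
      t = R.card ∧
      (∀ i : Fin t, (v i).1 ^ 2 + (v i).2 ^ 2 = 1) ∧
      Function.Injective (fun i : Fin t => halfplane (v i) (c i)) ∧
      (R : Set (Set (ℝ × ℝ))) = Set.range (fun i : Fin t => halfplane (v i) (c i)) ∧
      (∀ i : Fin t, 0 < i.val →
        0 < ang (v ⟨0, ht⟩) (v i) ∧ ang (v ⟨0, ht⟩) (v i) < Real.pi) ∧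
      (∀ i j : Fin t, 0 < i.val → i < j →
        ang (v ⟨0, ht⟩) (v i) < ang (v ⟨0, ht⟩) (v j)) := by
  obtain ⟨q, hq⟩ := (Set.ne_univ_iff_exists_notMem _).1 hcov
  obtain ⟨p, hp⟩ := hint
  have hex : ∀ H : Set (ℝ × ℝ), ∃ w : (ℝ × ℝ) × ℝ, H ∈ R →
      w.1.1 ^ 2 + w.1.2 ^ 2 = 1 ∧ H = halfplane w.1 w.2 := by
    intro H
    by_cases h : H ∈ R
    · obtain ⟨v, c, h1, h2⟩ := hhp H h
      exact ⟨(v, c), fun _ => ⟨h1, h2⟩⟩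
    · exact ⟨0, fun h' => absurd h' h⟩
  choose w hw using hex
  set d : ℝ × ℝ := (p.1 - q.1, p.2 - q.2) with hdd
  have hpos : ∀ H ∈ R, 0 < (cpx7 d / cpx7 (w H).1).re := by
    intro H hH
    obtain ⟨h1, h2⟩ := hw H hH
    apply re_pos7 _ _ _ h1
    have hpH : p ∈ halfplane (w H).1 (w H).2 := h2 ▸ hp H hH
    have hqH : q ∉ halfplane (w H).1 (w H).2 := fun h => hq ⟨H, hH, by rw [h2]; exact h⟩
    simp only [halfplane, Set.mem_setOf_eq, not_le] at hpH hqH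
    simp only [hdd]
    linarith
  have hd : cpx7 d ≠ 0 := by
    obtain ⟨H, hH⟩ := hne
    intro h0
    have := hpos H hH
    simp [h0] at this
  set k : Set (ℝ × ℝ) → ℝ := fun H => Complex.arg (cpx7 d / cpx7 (w H).1) with hk
  have hinj : Set.InjOn k R := by
    intro H hH K hK hHK
    obtain ⟨h1, h2⟩ := hw H hH
    obtain ⟨h3, h4⟩ := hw K hK
    have e := inj7 d _ _ hd h1 h3 hHK
    by_contra hne'
    rcases le_total (w H).2 (w K).2 with h | h
    · refine hirr K hK (redundant7 R K H hH (Ne.symm hne') ?_)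
      rw [h2, h4, e]
      intro x hx
      exact le_trans h hx
    · refine hirr H hH (redundant7 R H K hK hne' ?_)
      rw [h2, h4, e]
      intro x hx
      exact le_trans h hx
  have hcard : (R.image k).card = R.card := Finset.card_image_of_injOn hinj
  set f := (R.image k).orderEmbOfFin hcard with hf
  have hg : ∀ i, ∃ H ∈ R, k H = f i := fun i =>
    Finset.mem_image.1 (Finset.orderEmbOfFin_mem (R.image k) hcard i)
  choose g hgR hgk using hg
  have hmono : ∀ i j, i < j → k (g i) < k (g j) := by
    intro i j hij
    rw [hgk, hgk]; exact f.strictMono hij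
  have hfun : (fun i => halfplane (w (g i)).1 (w (g i)).2) = g := by
    funext i
    exact (hw (g i) (hgR i)).2.symm
  have hang : ∀ i j, i < j → _ := fun i j hij =>
    ang7_eq (cpx7 d) (w (g i)).1 (w (g j)).1 hd (hpos _ (hgR i)) (hpos _ (hgR j)) (hmono i j hij)
  refine ⟨R.card, Finset.card_pos.2 hne, fun i => (w (g i)).1, fun i => (w (g i)).2, rfl,
    fun i => (hw _ (hgR i)).1, ?_, ?_, ?_, ?_⟩
  · show Function.Injective (fun i => halfplane (w (g i)).1 (w (g i)).2)
    rw [hfun]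
    intro i j hij
    apply f.injective
    rw [← hgk, ← hgk, hij]
  · show _ = Set.range (fun i => halfplane (w (g i)).1 (w (g i)).2)
    rw [hfun]
    ext H
    constructor
    · intro hH
      have : k H ∈ Set.range f := by
        rw [hf, Finset.range_orderEmbOfFin]
        exact Finset.mem_coe.2 (Finset.mem_image_of_mem k hH)
      obtain ⟨i, hi⟩ := this
      exact ⟨i, hinj (hgR i) hH (by rw [hgk, hi])⟩
    · rintro ⟨i, rfl⟩
      exact hgR i
  · intro i hi
    have h := hang ⟨0, Finset.card_pos.2 hne⟩ i hi
    have h' := hmono ⟨0, Finset.card_pos.2 hne⟩ i hi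
    dsimp only
    rw [h.1]
    exact ⟨sub_pos.2 h', h.2⟩
  · intro i j hi hij
    have h := hang ⟨0, Finset.card_pos.2 hne⟩ i hi
    have h2 := hang ⟨0, Finset.card_pos.2 hne⟩ j (lt_trans (show (⟨0, Finset.card_pos.2 hne⟩ : Fin R.card) < i from hi) hij)
    have h' := hmono i j hij
    dsimp only
    rw [h.1, h2.1]
    exact sub_lt_sub_right h' _
end

section
/- Let H_1, …, H_t (t ≥ 2) be halfplanes such that 0 < ang(H_1, H_2) < ang(H_1, H_3) < ⋯ < ang(H_1, H_t) ≤ π. If H_1 ∪ H_t ≠ ℝ², then neither H_1 nor H_t is redundant in {H_1, …, H_t}; that is, ⋃_{i=2}^{t} H_i ≠ ⋃_{i=1}^{t} H_i and ⋃_{i=1}^{t-1} H_i ≠ ⋃_{i=1}^{t} H_i. -/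
open scoped Classical

lemma ang_facts (u v : ℝ × ℝ) (hu : u.1 ^ 2 + u.2 ^ 2 = 1) (hv : v.1 ^ 2 + v.2 ^ 2 = 1) :
    Real.cos (ang u v) = u.1 * v.1 + u.2 * v.2 ∧
    Real.sin (ang u v) = -(u.1 * v.2 - u.2 * v.1) ∧ 0 ≤ ang u v := by
  have key : (Complex.ofReal u.1 + Complex.ofReal u.2 * Complex.I) /
      (Complex.ofReal v.1 + Complex.ofReal v.2 * Complex.I)
      = ⟨u.1 * v.1 + u.2 * v.2, -(u.1 * v.2 - u.2 * v.1)⟩ := by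
    have hne : (Complex.ofReal v.1 + Complex.ofReal v.2 * Complex.I) ≠ 0 := by
      intro h
      have h1 := congrArg Complex.re h
      have h2 := congrArg Complex.im h
      simp at h1 h2
      rw [h1, h2] at hv
      norm_num at hv
    rw [div_eq_iff hne]
    apply Complex.ext
    · simp
      linear_combination (-u.1) * hv
    · simp
      linear_combination (-u.2) * hv
  have hnorm : ‖(⟨u.1 * v.1 + u.2 * v.2, -(u.1 * v.2 - u.2 * v.1)⟩ : ℂ)‖ = 1 := by
    have h : ‖(⟨u.1 * v.1 + u.2 * v.2, -(u.1 * v.2 - u.2 * v.1)⟩ : ℂ)‖ ^ 2 = 1 := by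
      rw [Complex.sq_norm, Complex.normSq_mk]
      linear_combination (v.1 ^ 2 + v.2 ^ 2) * hu + hv
    have h0 := norm_nonneg (⟨u.1 * v.1 + u.2 * v.2, -(u.1 * v.2 - u.2 * v.1)⟩ : ℂ)
    nlinarith
  have hz : (⟨u.1 * v.1 + u.2 * v.2, -(u.1 * v.2 - u.2 * v.1)⟩ : ℂ) ≠ 0 := by
    intro h; rw [h] at hnorm; simp at hnorm
  have hc := Complex.cos_arg hz
  have hs := Complex.sin_arg (⟨u.1 * v.1 + u.2 * v.2, -(u.1 * v.2 - u.2 * v.1)⟩ : ℂ)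
  rw [hnorm, div_one] at hc hs
  have hlow := Complex.neg_pi_lt_arg (⟨u.1 * v.1 + u.2 * v.2, -(u.1 * v.2 - u.2 * v.1)⟩ : ℂ)
  unfold ang
  rw [key]
  have hpi := Real.pi_pos
  dsimp only at hc hs ⊢
  split_ifs with h
  · rw [Real.cos_add_two_pi, Real.sin_add_two_pi]
    exact ⟨hc, hs, by linarith⟩
  · exact ⟨hc, hs, by linarith⟩

lemma far_point {t : ℕ} (v : Fin t → ℝ × ℝ) (c : Fin t → ℝ) (k : Fin t) (s : ℝ)
    (hu : (v k).1 ^ 2 + (v k).2 ^ 2 = 1)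
    (h : ∀ i, i ≠ k → 0 < s * ((v k).1 * (v i).2 - (v k).2 * (v i).1) ∨
      ((v k).1 * (v i).2 - (v k).2 * (v i).1 = 0 ∧
        (v k).1 * (v i).1 + (v k).2 * (v i).2 = -1)) :
    ∃ p, p ∈ halfplane (v k) (c k) ∧ ∀ i, i ≠ k → p ∉ halfplane (v i) (c i) := by
  obtain ⟨a, ha⟩ : ∃ a : ℝ, ∀ i, |c i| + 1 ≤ a :=
    (Filter.eventually_all.2 fun i => Filter.eventually_ge_atTop (|c i| + 1)).exists
  obtain ⟨b, hb⟩ : ∃ b : ℝ, ∀ i,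
      (a * ((v k).1 * (v i).1 + (v k).2 * (v i).2) - c i) /
        (s * ((v k).1 * (v i).2 - (v k).2 * (v i).1)) < b :=
    (Filter.eventually_all.2 fun i => Filter.eventually_gt_atTop _).exists
  refine ⟨(a * (v k).1 + b * s * (v k).2, a * (v k).2 - b * s * (v k).1), ?_, ?_⟩
  · have h1 := ha k
    have h2 := le_abs_self (c k)
    have : (v k).1 * (a * (v k).1 + b * s * (v k).2) +
      (v k).2 * (a * (v k).2 - b * s * (v k).1) = a := by linear_combination a * hu
    simp only [halfplane, Set.mem_setOf_eq]
    linarith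
  · intro i hi
    simp only [halfplane, Set.mem_setOf_eq, not_le]
    have e : (v i).1 * (a * (v k).1 + b * s * (v k).2) +
      (v i).2 * (a * (v k).2 - b * s * (v k).1) =
      a * ((v k).1 * (v i).1 + (v k).2 * (v i).2)
        - b * (s * ((v k).1 * (v i).2 - (v k).2 * (v i).1)) := by ring
    rw [e]
    rcases h i hi with h1 | ⟨h1, h2⟩
    · have := (div_lt_iff₀ h1).1 (hb i)
      linarith
    · rw [h1, h2]
      have h1 := ha i
      have h2 := neg_abs_le (c i)
      linarith

lemma ne_of_far {t : ℕ} (v : Fin t → ℝ × ℝ) (c : Fin t → ℝ) (k : Fin t) (m : ℕ) (hm : k.val = m)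
    (h : ∃ p, p ∈ halfplane (v k) (c k) ∧ ∀ i, i ≠ k → p ∉ halfplane (v i) (c i)) :
    (⋃ i ∈ {i : Fin t | i.val ≠ m}, halfplane (v i) (c i)) ≠
      (⋃ i : Fin t, halfplane (v i) (c i)) := by
  obtain ⟨p, hp, hq⟩ := h
  intro heq
  have : p ∈ (⋃ i : Fin t, halfplane (v i) (c i)) := Set.mem_iUnion.2 ⟨k, hp⟩
  rw [← heq] at this
  simp only [Set.mem_iUnion] at this
  obtain ⟨i, hi, hpi⟩ := this
  refine hq i ?_ hpi
  rintro rfl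
  exact hi hm

theorem stmt8 (t : ℕ) (ht : 2 ≤ t) (v : Fin t → ℝ × ℝ) (c : Fin t → ℝ)
    (hunit : ∀ i : Fin t, (v i).1 ^ 2 + (v i).2 ^ 2 = 1)
    (hpos : 0 < ang (v ⟨0, by omega⟩) (v ⟨1, by omega⟩))
    (hmono : ∀ i j : Fin t, 0 < i.val → i < j →
      ang (v ⟨0, by omega⟩) (v i) < ang (v ⟨0, by omega⟩) (v j))
    (hle : ang (v ⟨0, by omega⟩) (v ⟨t - 1, by omega⟩) ≤ Real.pi)
    (hcup : halfplane (v ⟨0, by omega⟩) (c ⟨0, by omega⟩) ∪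
        halfplane (v ⟨t - 1, by omega⟩) (c ⟨t - 1, by omega⟩) ≠ Set.univ) :
    (⋃ i ∈ {i : Fin t | i.val ≠ 0}, halfplane (v i) (c i)) ≠
      (⋃ i : Fin t, halfplane (v i) (c i)) ∧
    (⋃ i ∈ {i : Fin t | i.val ≠ t - 1}, halfplane (v i) (c i)) ≠
      (⋃ i : Fin t, halfplane (v i) (c i)) := by
  have hang := fun i => ang_facts (v ⟨0, by omega⟩) (v i) (hunit _) (hunit i)
  have hpos' : ∀ i : Fin t, 0 < i.val → 0 < ang (v ⟨0, by omega⟩) (v i) := by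
    intro i hi
    rcases Nat.lt_or_ge 1 i.val with h | h
    · exact hpos.trans (hmono ⟨1, by omega⟩ i (by simp) h)
    · have : i = ⟨1, by omega⟩ := Fin.ext (by simp; omega)
      rw [this]; exact hpos
  have hlt : ∀ i : Fin t, 0 < i.val → i.val ≠ t - 1 → ang (v ⟨0, by omega⟩) (v i) <
      ang (v ⟨0, by omega⟩) (v ⟨t - 1, by omega⟩) := by
    intro i hi hi'
    exact hmono i _ hi (Fin.lt_def.2 (by have := i.2; simp; omega))
  have hle' : ∀ i : Fin t, 0 < i.val → ang (v ⟨0, by omega⟩) (v i) ≤ Real.pi := by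
    intro i hi
    by_cases h : i.val = t - 1
    · have : i = ⟨t - 1, by omega⟩ := Fin.ext h
      rw [this]; exact hle
    · exact (hlt i hi h).le.trans hle
  have hlast : ∀ i : Fin t, 0 < i.val → 
      0 < (-1) * ((v ⟨0, by omega⟩).1 * (v i).2 - (v ⟨0, by omega⟩).2 * (v i).1) ∨
      ((v ⟨0, by omega⟩).1 * (v i).2 - (v ⟨0, by omega⟩).2 * (v i).1 = 0 ∧
        (v ⟨0, by omega⟩).1 * (v i).1 + (v ⟨0, by omega⟩).2 * (v i).2 = -1) := by
    intro i hi
    obtain ⟨h1, h2, -⟩ := hang i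
    rcases (hle' i hi).lt_or_eq with h | h
    · left
      have := Real.sin_pos_of_pos_of_lt_pi (hpos' i hi) h
      linarith
    · right
      rw [h] at h1 h2
      rw [Real.cos_pi] at h1
      rw [Real.sin_pi] at h2
      constructor <;> linarith
  constructor
  · refine ne_of_far v c ⟨0, by omega⟩ 0 rfl (far_point v c _ (-1) (hunit _) ?_)
    intro i hi
    exact hlast i (Nat.pos_of_ne_zero fun h => hi (Fin.ext h))
  · refine ne_of_far v c ⟨t - 1, by omega⟩ (t - 1) rfl (far_point v c _ 1 (hunit _) ?_)
    intro i hi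
    have hi' : i.val ≠ t - 1 := fun h => hi (Fin.ext h)
    by_cases h0 : i.val = 0
    · have : i = ⟨0, by omega⟩ := Fin.ext h0
      rw [this]
      rcases hlast ⟨t - 1, by omega⟩ (by simp; omega) with h | ⟨h, h'⟩
      · left; linarith
      · right; constructor <;> linarith
    · left
      have hi0 : 0 < i.val := Nat.pos_of_ne_zero h0
      have h1 := hlt i hi0 hi'
      have h2 := hpos' i hi0
      have h3 := Real.sin_pos_of_pos_of_lt_pi (sub_pos.2 h1) (by linarith)
      rw [Real.sin_sub] at h3
      obtain ⟨a1, a2, -⟩ := hang i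
      obtain ⟨b1, b2, -⟩ := hang ⟨t - 1, by omega⟩
      rw [a1, a2, b1, b2] at h3
      have hu := hunit ⟨0, by omega⟩
      refine h3.trans_eq ?_
      linear_combination ((v ⟨t - 1, by omega⟩).1 * (v i).2 - (v ⟨t - 1, by omega⟩).2 * (v i).1) * hu
end

section
/- Let H_1, …, H_t (t ≥ 2) be halfplanes such that 0 < ang(H_1, H_2) < ang(H_1, H_3) < ⋯ < ang(H_1, H_t) ≤ π. If the family {H_1, …, H_t} is irreducible, then ⋂_{i=1}^{t} H_i = H_1 ∩ H_t. -/
open scoped Classical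

lemma ang_spec (u w : ℝ × ℝ) (hu : u.1 ^ 2 + u.2 ^ 2 = 1) (hw : w.1 ^ 2 + w.2 ^ 2 = 1) :
    w.1 = u.1 * Real.cos (ang u w) + u.2 * Real.sin (ang u w) ∧
    w.2 = -u.1 * Real.sin (ang u w) + u.2 * Real.cos (ang u w) := by
  have key : ∀ z : ℂ, z = (Complex.ofReal u.1 + Complex.ofReal u.2 * Complex.I) /
      (Complex.ofReal w.1 + Complex.ofReal w.2 * Complex.I) →
      Real.cos (ang u w) = Real.cos z.arg ∧ Real.sin (ang u w) = Real.sin z.arg := by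
    intro z hz
    unfold ang
    simp only [← hz]
    split_ifs <;> simp
  obtain ⟨hc, hs⟩ := key _ rfl
  have hz : (Complex.ofReal u.1 + Complex.ofReal u.2 * Complex.I) /
      (Complex.ofReal w.1 + Complex.ofReal w.2 * Complex.I) =
      ⟨u.1 * w.1 + u.2 * w.2, u.2 * w.1 - u.1 * w.2⟩ := by
    have hne : (Complex.ofReal w.1 + Complex.ofReal w.2 * Complex.I) ≠ 0 := by
      intro h
      have h1 := congrArg Complex.re h
      have h2 := congrArg Complex.im h
      simp at h1 h2
      rw [h1, h2] at hw
      norm_num at hw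
    rw [div_eq_iff hne]
    apply Complex.ext
    · simp
      linear_combination (-u.1) * hw
    · simp
      linear_combination (-u.2) * hw
  rw [hz] at hc hs
  have hn : ‖(⟨u.1 * w.1 + u.2 * w.2, u.2 * w.1 - u.1 * w.2⟩ : ℂ)‖ = 1 := by
    have h : ‖(⟨u.1 * w.1 + u.2 * w.2, u.2 * w.1 - u.1 * w.2⟩ : ℂ)‖ ^ 2 = 1 := by
      rw [← Complex.normSq_eq_norm_sq, Complex.normSq_mk]
      linear_combination (w.1 ^ 2 + w.2 ^ 2) * hu + hw
    nlinarith [norm_nonneg (⟨u.1 * w.1 + u.2 * w.2, u.2 * w.1 - u.1 * w.2⟩ : ℂ)]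
  rw [Complex.cos_arg (by intro h; rw [h] at hn; simp at hn), hn] at hc
  rw [Complex.sin_arg, hn] at hs
  rw [hc, hs]
  constructor
  · simp only [div_one]
    linear_combination (-w.1) * hu
  · simp only [div_one]
    linear_combination (-w.2) * hu

theorem stmt9 (t : ℕ) (ht : 2 ≤ t) (v : Fin t → ℝ × ℝ) (c : Fin t → ℝ)
    (hunit : ∀ i : Fin t, (v i).1 ^ 2 + (v i).2 ^ 2 = 1)
    (hpos : 0 < ang (v ⟨0, by omega⟩) (v ⟨1, by omega⟩))
    (hmono : ∀ i j : Fin t, 0 < i.val → i < j →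
      ang (v ⟨0, by omega⟩) (v i) < ang (v ⟨0, by omega⟩) (v j))
    (hle : ang (v ⟨0, by omega⟩) (v ⟨t - 1, by omega⟩) ≤ Real.pi)
    (hirr : IrreducibleFam
      (Finset.image (fun i : Fin t => halfplane (v i) (c i)) Finset.univ)) :
    (⋂ i : Fin t, halfplane (v i) (c i)) =
      halfplane (v ⟨0, by omega⟩) (c ⟨0, by omega⟩) ∩
        halfplane (v ⟨t - 1, by omega⟩) (c ⟨t - 1, by omega⟩) := by
  ext p
  simp only [Set.mem_iInter, Set.mem_inter_iff]
  constructor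
  · intro h
    exact ⟨h _, h _⟩
  rintro ⟨h0, h1⟩ i
  by_contra hp
  by_cases hi0 : i.val = 0
  · exact hp (by convert h0 <;> exact hi0)
  by_cases hi1 : i.val = t - 1
  · exact hp (by convert h1 <;> exact hi1)
  have hit := i.isLt
  have hα : 0 < ang (v ⟨0, by omega⟩) (v i) := by
    by_cases h : i.val = 1
    · have : i = ⟨1, by omega⟩ := Fin.ext h
      rw [this]; exact hpos
    · exact hpos.trans (hmono ⟨1, by omega⟩ i (by simp) (Fin.lt_def.2 (by simp only; omega)))
  have hαβ := hmono i ⟨t - 1, by omega⟩ (by omega) (Fin.lt_def.2 (by simp only; omega))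
  have hq : ∃ q ∈ halfplane (v i) (c i), ∀ j, halfplane (v j) (c j) ≠ halfplane (v i) (c i) →
      q ∉ halfplane (v j) (c j) := by
    by_contra hno
    push Not at hno
    refine hirr (halfplane (v i) (c i)) (Finset.mem_image_of_mem _ (Finset.mem_univ i)) ?_
    unfold Redundant
    apply Set.Subset.antisymm
    · rintro q ⟨R, hR, hqR⟩
      by_cases hRi : R = halfplane (v i) (c i)
      · rw [hRi] at hqR
        obtain ⟨j, hj, hqj⟩ := hno q hqR
        exact ⟨_, Finset.mem_coe.2 (Finset.mem_erase.2
          ⟨hj, Finset.mem_image_of_mem _ (Finset.mem_univ j)⟩), hqj⟩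
      · exact ⟨R, Finset.mem_coe.2 (Finset.mem_erase.2 ⟨hRi, Finset.mem_coe.1 hR⟩), hqR⟩
    · apply Set.sUnion_subset_sUnion
      exact Finset.coe_subset.2 (Finset.erase_subset _ _)
  obtain ⟨q, hqi, hq⟩ := hq
  have hq0 := hq ⟨0, by omega⟩ (fun h => hp (h ▸ h0))
  have hq1 := hq ⟨t - 1, by omega⟩ (fun h => hp (h ▸ h1))
  obtain ⟨ha1, ha2⟩ := ang_spec _ _ (hunit ⟨0, by omega⟩) (hunit i)
  obtain ⟨hb1, hb2⟩ := ang_spec _ _ (hunit ⟨0, by omega⟩) (hunit ⟨t - 1, by omega⟩)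
  simp only [halfplane, Set.mem_setOf_eq, not_le] at h0 h1 hp hqi hq0 hq1
  generalize v ⟨0, by omega⟩ = u at *
  generalize v ⟨t - 1, by omega⟩ = w at *
  generalize v i = x at *
  generalize ang u x = α at *
  generalize ang u w = β at *
  have s1 : 0 < Real.sin α := Real.sin_pos_of_pos_of_lt_pi hα (by linarith)
  have s2 : 0 ≤ Real.sin β := Real.sin_nonneg_of_nonneg_of_le_pi (by linarith) hle
  have s3 : 0 < Real.sin (β - α) := Real.sin_pos_of_pos_of_lt_pi (by linarith) (by linarith)
  have e1 : Real.sin β * x.1 = Real.sin (β - α) * u.1 + Real.sin α * w.1 := by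
    rw [Real.sin_sub, ha1, hb1]; ring
  have e2 : Real.sin β * x.2 = Real.sin (β - α) * u.2 + Real.sin α * w.2 := by
    rw [Real.sin_sub, ha2, hb2]; ring
  have p1 := mul_pos s3 (sub_pos.2 (hq0.trans_le h0))
  have p2 := mul_pos s1 (sub_pos.2 (hq1.trans_le h1))
  have p3 := mul_nonneg s2 (sub_pos.2 (hp.trans_le hqi)).le
  have : Real.sin β * (x.1 * q.1 + x.2 * q.2 - (x.1 * p.1 + x.2 * p.2)) =
      -(Real.sin (β - α) * (u.1 * p.1 + u.2 * p.2 - (u.1 * q.1 + u.2 * q.2))) -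
      Real.sin α * (w.1 * p.1 + w.2 * p.2 - (w.1 * q.1 + w.2 * q.2)) := by
    linear_combination (q.1 - p.1) * e1 + (q.2 - p.2) * e2
  linarith
end

section
/- Let Δ > 0, let S and S' be finite sets of points contained in the open square (−Δ, Δ)², let k ≥ 0 be an integer, and let ℋ be a finite family of halfplanes that contains the four halfplanes {(x, y) : y ≤ −Δ}, {(x, y) : y ≥ Δ}, {(x, y) : x ≤ −Δ}, and {(x, y) : x ≥ Δ}. If there exists a set cover 𝒵 ⊆ ℋ of S with memb(S', 𝒵) ≤ k, then there exists a set cover 𝒵'' ⊆ ℋ of S with memb(S', 𝒵'') ≤ k such that either ⋃𝒵'' = ℝ², or 𝒵'' is regular (i.e., irreducible and its complement region is nonempty and bounded). -/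
open scoped Classical

/-- The complement region of a finite family of halfplanes: the closure of the
complement of its union. -/
def complementRegion (R : Finset (Set (ℝ × ℝ))) : Set (ℝ × ℝ) :=
  closure ((⋃₀ (R : Set (Set (ℝ × ℝ))))ᶜ)

/-- A finite family of halfplanes is regular if it is irreducible and its complement
region is nonempty and bounded. -/
def RegularFam (R : Finset (Set (ℝ × ℝ))) : Prop :=
  IrreducibleFam R ∧ (complementRegion R).Nonempty ∧
    Bornology.IsBounded (complementRegion R)

theorem stmt10 (Δ : ℝ) (hΔ : 0 < Δ) (S S' : Finset (ℝ × ℝ))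
    (hS : ∀ p ∈ S, -Δ < p.1 ∧ p.1 < Δ ∧ -Δ < p.2 ∧ p.2 < Δ)
    (hS' : ∀ p ∈ S', -Δ < p.1 ∧ p.1 < Δ ∧ -Δ < p.2 ∧ p.2 < Δ)
    (k : ℕ) (H : Finset (Set (ℝ × ℝ))) (hhp : ∀ R ∈ H, IsHalfplane R)
    (hd1 : {p : ℝ × ℝ | p.2 ≤ -Δ} ∈ H) (hd2 : {p : ℝ × ℝ | Δ ≤ p.2} ∈ H)
    (hd3 : {p : ℝ × ℝ | p.1 ≤ -Δ} ∈ H) (hd4 : {p : ℝ × ℝ | Δ ≤ p.1} ∈ H)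
    (hex : ∃ Z ⊆ H, IsCover S Z ∧ membS S' Z ≤ k) :
    ∃ Z'' ⊆ H, IsCover S Z'' ∧ membS S' Z'' ≤ k ∧
      (⋃₀ (Z'' : Set (Set (ℝ × ℝ))) = Set.univ ∨ RegularFam Z'') := by
  obtain ⟨Z, hZH, hZc, hZm⟩ := hex
  let W : Finset (Set (ℝ × ℝ)) := Z ∪ {{p : ℝ × ℝ | p.2 ≤ -Δ}, {p : ℝ × ℝ | Δ ≤ p.2},
    {p : ℝ × ℝ | p.1 ≤ -Δ}, {p : ℝ × ℝ | Δ ≤ p.1}}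
  have hWdef : ∀ R, R ∈ W ↔ R ∈ Z ∨ R = {p : ℝ × ℝ | p.2 ≤ -Δ} ∨ R = {p : ℝ × ℝ | Δ ≤ p.2} ∨
      R = {p : ℝ × ℝ | p.1 ≤ -Δ} ∨ R = {p : ℝ × ℝ | Δ ≤ p.1} := by
    intro R; simp only [W, Finset.mem_union, Finset.mem_insert, Finset.mem_singleton]
  have hWH : W ⊆ H := by
    intro R hR
    rcases (hWdef R).1 hR with h | rfl | rfl | rfl | rfl
    · exact hZH h
    all_goals assumption
  obtain ⟨Y, hY, hmin⟩ := Finset.exists_min_image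
    (W.powerset.filter (fun Y : Finset (Set (ℝ × ℝ)) => ⋃₀ (Y : Set (Set (ℝ × ℝ))) = ⋃₀ (W : Set (Set (ℝ × ℝ)))))
    Finset.card ⟨W, by simp⟩
  rw [Finset.mem_filter, Finset.mem_powerset] at hY
  obtain ⟨hYW, hYU⟩ := hY
  refine ⟨Y, hYW.trans hWH, ?_, ?_, ?_⟩
  · intro p hp
    obtain ⟨R, hR, hpR⟩ := hZc p hp
    have h : p ∈ ⋃₀ (Y : Set (Set (ℝ × ℝ))) := by
      rw [hYU]
      exact ⟨R, Finset.mem_coe.2 ((hWdef R).2 (Or.inl hR)), hpR⟩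
    obtain ⟨R', hR', h'⟩ := h
    exact ⟨R', Finset.mem_coe.1 hR', h'⟩
  · refine le_trans (Finset.sup_mono_fun ?_) hZm
    intro p hp
    obtain ⟨h1, h2, h3, h4⟩ := hS' p hp
    refine Finset.card_le_card ?_
    intro R hR
    rw [Finset.mem_filter] at hR ⊢
    refine ⟨?_, hR.2⟩
    rcases (hWdef R).1 (hYW hR.1) with h | rfl | rfl | rfl | rfl
    · exact h
    all_goals
      have := hR.2
      simp only [Set.mem_setOf_eq] at this
      linarith
  · by_cases hu : ⋃₀ (Y : Set (Set (ℝ × ℝ))) = Set.univ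
    · exact Or.inl hu
    right
    refine ⟨?_, ?_, ?_⟩
    · intro R hR hred
      have := hmin (Y.erase R) (by
        rw [Finset.mem_filter, Finset.mem_powerset]
        exact ⟨(Finset.erase_subset _ _).trans hYW, hred.symm.trans hYU⟩)
      have := Finset.card_erase_lt_of_mem hR
      omega
    · exact (Set.nonempty_compl.2 hu).closure
    · refine Bornology.IsBounded.closure ?_
      refine (Metric.isBounded_Icc ((-Δ, -Δ) : ℝ × ℝ) (Δ, Δ)).subset ?_
      intro p hp
      rw [hYU] at hp
      have key : ∀ R ∈ W, p ∉ R := fun R hR hpR => hp ⟨R, Finset.mem_coe.2 hR, hpR⟩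
      have k1 := key _ ((hWdef _).2 (Or.inr (Or.inl rfl)))
      have k2 := key _ ((hWdef _).2 (Or.inr (Or.inr (Or.inl rfl))))
      have k3 := key _ ((hWdef _).2 (Or.inr (Or.inr (Or.inr (Or.inl rfl)))))
      have k4 := key _ ((hWdef _).2 (Or.inr (Or.inr (Or.inr (Or.inr rfl)))))
      simp only [Set.mem_setOf_eq, not_le] at k1 k2 k3 k4
      exact ⟨⟨k3.le, k1.le⟩, ⟨k4.le, k2.le⟩⟩
end

section
/- Let S and S' be finite sets of points in ℝ² and ℋ a finite family of halfplanes with S ⊆ ⋃ℋ and ⋃ℋ ≠ ℝ². Suppose 𝒵 ⊆ ℋ is a minimum-size set cover of S (i.e., |𝒵| ≤ |𝒵'| for every set cover 𝒵' ⊆ ℋ of S) that is 1-stable. Then for every set cover 𝒵' ⊆ ℋ of S and every point p ∈ S', memb(p, 𝒵) ≤ memb(p, 𝒵') + 2; consequently, memb(S', 𝒵) ≤ opt(S, S', ℋ) + 2. -/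
open scoped Classical

/-- `Z` is `k`-expandable in `H`: some `≤ k`-element swap strictly enlarges the union. -/
def Expandable (H : Finset (Set (ℝ × ℝ))) (k : ℕ) (Z : Finset (Set (ℝ × ℝ))) : Prop :=
  ∃ Z' ⊆ H, (Z \ Z').card = (Z' \ Z).card ∧ (Z' \ Z).card ≤ k ∧
    ⋃₀ (Z : Set (Set (ℝ × ℝ))) ⊂ ⋃₀ (Z' : Set (Set (ℝ × ℝ)))

/-- `Z` is `k`-stable in `H` if it is not `k`-expandable. -/
def Stable (H : Finset (Set (ℝ × ℝ))) (k : ℕ) (Z : Finset (Set (ℝ × ℝ))) : Prop :=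
  ¬ Expandable H k Z

/-- The dual linear form based at `o`. -/
def lin13 (o u q : ℝ × ℝ) : ℝ := u.1 * (q.1 - o.1) + u.2 * (q.2 - o.2)

lemma rep13 (R : Set (ℝ × ℝ)) (o : ℝ × ℝ) (hR : IsHalfplane R) (ho : o ∉ R) :
    ∃ u : ℝ × ℝ, ∀ q, q ∈ R ↔ 1 ≤ lin13 o u q := by
  obtain ⟨v, c, -, rfl⟩ := hR
  simp only [halfplane, Set.mem_setOf_eq, not_le] at ho
  have hd : 0 < c - (v.1 * o.1 + v.2 * o.2) := by linarith
  refine ⟨(v.1 / (c - (v.1 * o.1 + v.2 * o.2)), v.2 / (c - (v.1 * o.1 + v.2 * o.2))), ?_⟩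
  intro q
  simp only [halfplane, Set.mem_setOf_eq, lin13]
  have : v.1 / (c - (v.1 * o.1 + v.2 * o.2)) * (q.1 - o.1)
      + v.2 / (c - (v.1 * o.1 + v.2 * o.2)) * (q.2 - o.2)
      = (v.1 * (q.1 - o.1) + v.2 * (q.2 - o.2)) / (c - (v.1 * o.1 + v.2 * o.2)) := by
    ring
  rw [this, le_div_iff₀ hd]
  constructor <;> intro h <;> linarith

lemma cone13 (o p s um uj u' : ℝ × ℝ)
    (hxm : 1 ≤ lin13 o um p) (hym : lin13 o um s < 1)
    (hxj : 1 ≤ lin13 o uj p) (hyj : 1 ≤ lin13 o uj s)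
    (hx' : lin13 o u' p < 1) (hy' : 1 ≤ lin13 o u' s)
    (hD : 0 ≤ lin13 o uj p * lin13 o um s - lin13 o um p * lin13 o uj s) :
    ∃ a b : ℝ, 0 ≤ a ∧ 0 ≤ b ∧ a + b < 1 ∧ ∀ q, lin13 o um q = a * lin13 o uj q + b * lin13 o u' q := by
  have key : ∀ q, lin13 o um q * (lin13 o uj p * lin13 o u' s - lin13 o u' p * lin13 o uj s)
      = lin13 o uj q * (lin13 o um p * lin13 o u' s - lin13 o u' p * lin13 o um s)
      + lin13 o u' q * (lin13 o uj p * lin13 o um s - lin13 o um p * lin13 o uj s) := by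
    intro q; simp only [lin13]; ring
  have ks := key s
  generalize hxm_ : lin13 o um p = xm at *
  generalize hym_ : lin13 o um s = ym at *
  generalize hxj_ : lin13 o uj p = xj at *
  generalize hyj_ : lin13 o uj s = yj at *
  generalize hx'_ : lin13 o u' p = x' at *
  generalize hy'_ : lin13 o u' s = y' at *
  have hympos : 0 < ym := by
    by_contra h
    push Not at h
    nlinarith [mul_nonneg (by linarith : 0 ≤ xj) (by linarith : 0 ≤ -ym), mul_pos (by linarith : 0 < xm) (by linarith : 0 < yj)]
  have hlt : yj < xj := by
    by_contra h
    push Not at h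
    nlinarith [mul_pos (by linarith : 0 < xj) (by linarith : 0 < 1 - ym), mul_nonneg (by linarith : 0 ≤ xm - 1) (by linarith : 0 ≤ yj)]
  have hD1 : 0 < xj * y' - x' * yj := by
    have : x' * yj < 1 * yj := by gcongr
    have : xj * 1 ≤ xj * y' := by gcongr
    linarith
  have hD2 : 0 < xm * y' - x' * ym := by
    have : x' * ym < 1 * ym := by gcongr
    have : xm * 1 ≤ xm * y' := by gcongr
    linarith
  refine ⟨(xm * y' - x' * ym) / (xj * y' - x' * yj), (xj * ym - xm * yj) / (xj * y' - x' * yj),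
    by positivity, by positivity, ?_, ?_⟩
  · rw [← add_div, div_lt_one hD1]
    have h1 := mul_le_mul_of_nonneg_right hyj hD2.le
    have h2 := mul_le_mul_of_nonneg_right hy' hD
    have h3 := mul_lt_mul_of_pos_right hym hD1
    linarith
  · intro q
    have := key q
    rw [div_mul_eq_mul_div, div_mul_eq_mul_div, ← add_div, eq_div_iff hD1.ne']
    linarith

lemma swap13 (S : Finset (ℝ × ℝ)) (H : Finset (Set (ℝ × ℝ)))
    (Z : Finset (Set (ℝ × ℝ))) (hZsub : Z ⊆ H) (hZcov : IsCover S Z)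
    (hZmin : ∀ Z' ⊆ H, IsCover S Z' → Z.card ≤ Z'.card)
    (hZstable : Stable H 1 Z) (o : ℝ × ℝ) (f : Set (ℝ × ℝ) → ℝ × ℝ)
    (hf : ∀ R ∈ H, ∀ q, q ∈ R ↔ 1 ≤ lin13 o (f R) q)
    (A B C : Set (ℝ × ℝ)) (hA : A ∈ Z) (hB : B ∈ Z) (hC : C ∈ H) (hAB : A ≠ B)
    (a b : ℝ) (ha : 0 ≤ a) (hb : 0 ≤ b) (hab : a + b < 1)
    (he : ∀ q, lin13 o (f A) q = a * lin13 o (f B) q + b * lin13 o (f C) q) : False := by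
  have hnc : ¬ IsCover S (Z.erase A) := by
    intro h
    have h1 := hZmin _ ((Finset.erase_subset _ _).trans hZsub) h
    have h2 := Finset.card_erase_lt_of_mem hA
    omega
  simp only [IsCover] at hnc
  push Not at hnc
  obtain ⟨q, hqS, hq⟩ := hnc
  obtain ⟨R, hR, hqR⟩ := hZcov q hqS
  have hRA : R = A := by
    by_contra h
    exact hq R (Finset.mem_erase.2 ⟨h, hR⟩) hqR
  subst hRA
  have hM : 1 ≤ lin13 o (f R) q := (hf R (hZsub hR) q).1 hqR
  have hother : ∀ T ∈ Z, T ≠ R → lin13 o (f T) q < 1 := by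
    intro T hT hne
    by_contra h
    exact hq T (Finset.mem_erase.2 ⟨hne, hT⟩) ((hf T (hZsub hT) q).2 (not_lt.1 h))
  have hBq := hother B hB hAB.symm
  have heq := he q
  have hw : lin13 o (f R) q < lin13 o (f C) q := by
    by_contra h
    push Not at h
    have h1 : a * lin13 o (f B) q ≤ a * lin13 o (f R) q := by gcongr; linarith
    have h2 : b * lin13 o (f C) q ≤ b * lin13 o (f R) q := by gcongr
    have h3 : (a + b) * lin13 o (f R) q < 1 * lin13 o (f R) q := by gcongr
    linarith
  have hw0 : 0 < lin13 o (f C) q := by linarith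
  obtain ⟨w, hwdef⟩ : ∃ w, w = lin13 o (f C) q := ⟨_, rfl⟩
  rw [← hwdef] at hw hw0
  let r : ℝ × ℝ := (o.1 + (q.1 - o.1) / w, o.2 + (q.2 - o.2) / w)
  have hr : ∀ u, lin13 o u r = lin13 o u q / w := by
    intro u; simp only [lin13, r]; ring
  have hrC : r ∈ C := by
    rw [hf C hC, hr, ← hwdef, div_self hw0.ne']
  have hrZ : ∀ T ∈ Z, r ∉ T := by
    intro T hT
    rw [hf T (hZsub hT), hr, le_div_iff₀ hw0, not_le]
    by_cases h : T = R
    · subst h; linarith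
    · have := hother T hT h; linarith
  have hCZ : C ∉ Z := fun h => hrZ C h hrC
  apply hZstable
  have hRC : R ≠ C := fun h => hCZ (h ▸ hR)
  have e1 : Z \ insert C (Z.erase R) = {R} := by
    ext T; simp only [Finset.mem_sdiff, Finset.mem_insert, Finset.mem_erase, Finset.mem_singleton]
    constructor
    · rintro ⟨h1, h2⟩; by_contra h; exact h2 (Or.inr ⟨h, h1⟩)
    · rintro rfl; exact ⟨hR, by tauto⟩
  have e2 : insert C (Z.erase R) \ Z = {C} := by
    ext T; simp only [Finset.mem_sdiff, Finset.mem_insert, Finset.mem_erase, Finset.mem_singleton]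
    constructor
    · rintro ⟨h1, h2⟩; tauto
    · rintro rfl; exact ⟨Or.inl rfl, hCZ⟩
  refine ⟨insert C (Z.erase R), ?_, ?_, ?_, ?_⟩
  · exact Finset.insert_subset hC ((Finset.erase_subset _ _).trans hZsub)
  · rw [e1, e2]; simp
  · rw [e2]; simp
  · rw [Set.ssubset_iff_exists]
    refine ⟨?_, r, ⟨C, by simp, hrC⟩, ?_⟩
    · rintro t ⟨T, hT, htT⟩
      have hT' : T ∈ Z := hT
      by_cases h : T = R
      · subst h
        have h1 := (hf T (hZsub hT') t).1 htT
        by_cases h2 : t ∈ C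
        · exact ⟨C, by simp, h2⟩
        · refine ⟨B, ?_, ?_⟩
          · simp only [Finset.mem_coe, Finset.mem_insert, Finset.mem_erase]
            exact Or.inr ⟨hAB.symm, hB⟩
          · rw [hf B (hZsub hB)]
            rw [hf C hC, not_le] at h2
            by_contra h3
            push Not at h3
            have h4 := he t
            have h5 : a * lin13 o (f B) t ≤ a * 1 := by gcongr
            have h6 : b * lin13 o (f C) t ≤ b * 1 := by gcongr
            linarith
      · refine ⟨T, ?_, htT⟩
        simp only [Finset.mem_coe, Finset.mem_insert, Finset.mem_erase]
        exact Or.inr ⟨h, hT'⟩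
    · rintro ⟨T, hT, h⟩
      exact hrZ T hT h

lemma sign13 (o p s um uj : ℝ × ℝ) (hxm : 1 ≤ lin13 o um p) (hxj : 1 ≤ lin13 o uj p)
    (ε : ℝ)
    (hτ : 0 ≤ ε * ((um.1 * (p.2 - o.2) - um.2 * (p.1 - o.1)) / lin13 o um p
      - (uj.1 * (p.2 - o.2) - uj.2 * (p.1 - o.1)) / lin13 o uj p))
    (hε : 0 ≤ ε * ((s.1 - o.1) * (p.2 - o.2) - (s.2 - o.2) * (p.1 - o.1)))
    (hε0 : ε ≠ 0) :
    0 ≤ lin13 o uj p * lin13 o um s - lin13 o um p * lin13 o uj s := by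
  have h1 : 0 ≤ ε * ((um.1 * (p.2 - o.2) - um.2 * (p.1 - o.1)) * lin13 o uj p
      - (uj.1 * (p.2 - o.2) - uj.2 * (p.1 - o.1)) * lin13 o um p) := by
    have := mul_nonneg hτ (by positivity : 0 ≤ lin13 o um p * lin13 o uj p)
    have n1 : lin13 o um p ≠ 0 := by positivity
    have n2 : lin13 o uj p ≠ 0 := by positivity
    have aux : ∀ x y c d : ℝ, x ≠ 0 → y ≠ 0 →
        ε * (c / x - d / y) * (x * y) = ε * (c * y - d * x) := by
      intro x y c d hx hy
      field_simp
    rwa [aux _ _ _ _ n1 n2] at this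
  have h2 := mul_nonneg h1 hε
  have hN : 0 < (p.1 - o.1)^2 + (p.2 - o.2)^2 := by
    by_contra h
    have e1 : p.1 - o.1 = 0 := by nlinarith [sq_nonneg (p.1 - o.1), sq_nonneg (p.2 - o.2)]
    have e2 : p.2 - o.2 = 0 := by nlinarith [sq_nonneg (p.1 - o.1), sq_nonneg (p.2 - o.2)]
    simp only [lin13, e1, e2] at hxm
    linarith
  have hid : ε * ((um.1 * (p.2 - o.2) - um.2 * (p.1 - o.1)) * lin13 o uj p
      - (uj.1 * (p.2 - o.2) - uj.2 * (p.1 - o.1)) * lin13 o um p) *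
      (ε * ((s.1 - o.1) * (p.2 - o.2) - (s.2 - o.2) * (p.1 - o.1)))
      = (ε ^ 2 * ((p.1 - o.1)^2 + (p.2 - o.2)^2)) *
        (lin13 o uj p * lin13 o um s - lin13 o um p * lin13 o uj s) := by
    simp only [lin13]; ring
  rw [hid] at h2
  exact nonneg_of_mul_nonneg_right h2 (by positivity)

theorem stmt13 (S S' : Finset (ℝ × ℝ)) (H : Finset (Set (ℝ × ℝ)))
    (hhp : ∀ R ∈ H, IsHalfplane R) (hcov : IsCover S H)
    (hne : ⋃₀ (H : Set (Set (ℝ × ℝ))) ≠ Set.univ)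
    (Z : Finset (Set (ℝ × ℝ))) (hZsub : Z ⊆ H) (hZcov : IsCover S Z)
    (hZmin : ∀ Z' ⊆ H, IsCover S Z' → Z.card ≤ Z'.card)
    (hZstable : Stable H 1 Z) :
    (∀ Z' ⊆ H, IsCover S Z' → ∀ p ∈ S', memb p Z ≤ memb p Z' + 2) ∧
      membS S' Z ≤ optMemb S S' H + 2 := by
  have main : ∀ Z' ⊆ H, IsCover S Z' → ∀ p, memb p Z ≤ memb p Z' + 2 := by
    intro Z' hZ' hcov' p
    obtain ⟨o, ho⟩ := (Set.ne_univ_iff_exists_notMem _).1 hne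
    have hrep : ∀ R, ∃ u : ℝ × ℝ, R ∈ H → ∀ q, q ∈ R ↔ 1 ≤ lin13 o u q := by
      intro R
      by_cases hR : R ∈ H
      · obtain ⟨u, hu⟩ := rep13 R o (hhp R hR) (fun h => ho ⟨R, hR, h⟩)
        exact ⟨u, fun _ => hu⟩
      · exact ⟨0, fun h => absurd h hR⟩
    choose f hf using hrep
    rcases (Z.filter (fun R => p ∈ R)).eq_empty_or_nonempty with h0 | hnon
    · simp [memb, h0]
    let τ : Set (ℝ × ℝ) → ℝ := fun R =>
      ((f R).1 * (p.2 - o.2) - (f R).2 * (p.1 - o.1)) / lin13 o (f R) p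
    obtain ⟨A, hA, hAmin⟩ := Finset.exists_min_image _ τ hnon
    obtain ⟨B, hB, hBmax⟩ := Finset.exists_max_image _ τ hnon
    have hA' := Finset.mem_filter.1 hA
    have hB' := Finset.mem_filter.1 hB
    have hcov2 : IsCover S (Z.filter (fun R => p ∉ R) ∪ ({A, B} ∪ Z'.filter (fun R => p ∈ R))) := by
      intro s hs
      by_contra hcon
      push Not at hcon
      have hsA : s ∉ A := hcon A (by simp)
      have hsB : s ∉ B := hcon B (by simp)
      obtain ⟨J, hJ, hsJ⟩ := hZcov s hs
      have hpJ : p ∈ J := by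
        by_contra h
        exact hcon J (Finset.mem_union_left _ (Finset.mem_filter.2 ⟨hJ, h⟩)) hsJ
      obtain ⟨C, hC, hsC⟩ := hcov' s hs
      have hpC : p ∉ C := by
        intro h
        exact hcon C (Finset.mem_union_right _ (Finset.mem_union_right _
          (Finset.mem_filter.2 ⟨hC, h⟩))) hsC
      have hJf : J ∈ Z.filter (fun R => p ∈ R) := Finset.mem_filter.2 ⟨hJ, hpJ⟩
      have hpJ1 := (hf J (hZsub hJ) p).1 hpJ
      have hsJ1 := (hf J (hZsub hJ) s).1 hsJ
      have hsC1 := (hf C (hZ' hC) s).1 hsC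
      have hpC1 : lin13 o (f C) p < 1 := by rw [hf C (hZ' hC), not_le] at hpC; exact hpC
      have fin : ∀ M ∈ Z, p ∈ M → s ∉ M →
          0 ≤ lin13 o (f J) p * lin13 o (f M) s - lin13 o (f M) p * lin13 o (f J) s → False := by
        intro M hM hpM hsM hD
        have hsM1 : lin13 o (f M) s < 1 := by
          have h := hsM
          rw [hf M (hZsub hM), not_le] at h; exact h
        obtain ⟨a, b, ha, hb, hab, he⟩ := cone13 o p s (f M) (f J) (f C)
          ((hf M (hZsub hM) p).1 hpM) hsM1 hpJ1 hsJ1 hpC1 hsC1 hD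
        exact swap13 S H Z hZsub hZcov hZmin hZstable o f hf M J C hM hJ (hZ' hC)
          (fun h => hsM (h ▸ hsJ)) a b ha hb hab he
      rcases le_total 0 ((s.1 - o.1) * (p.2 - o.2) - (s.2 - o.2) * (p.1 - o.1)) with hsg | hsg
      · refine fin B hB'.1 hB'.2 hsB ?_
        refine sign13 o p s (f B) (f J) ((hf B (hZsub hB'.1) p).1 hB'.2) hpJ1 1 ?_ (by linarith)
          one_ne_zero
        have := hBmax J hJf
        simp only [τ] at this
        linarith
      · refine fin A hA'.1 hA'.2 hsA ?_
        refine sign13 o p s (f A) (f J) ((hf A (hZsub hA'.1) p).1 hA'.2) hpJ1 (-1) ?_ (by linarith)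
          (by norm_num)
        have := hAmin J hJf
        simp only [τ] at this
        linarith
    have hsub2 : (Z.filter (fun R => p ∉ R) ∪ ({A, B} ∪ Z'.filter (fun R => p ∈ R))) ⊆ H := by
      intro T hT
      simp only [Finset.mem_union, Finset.mem_filter, Finset.mem_insert,
        Finset.mem_singleton] at hT
      rcases hT with h | (rfl | rfl) | h
      · exact hZsub h.1
      · exact hZsub hA'.1
      · exact hZsub hB'.1
      · exact hZ' h.1
    have h1 := hZmin _ hsub2 hcov2
    have h2 := Finset.card_union_le (Z.filter (fun R => p ∉ R))
      ({A, B} ∪ Z'.filter (fun R => p ∈ R))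
    have h3 := Finset.card_union_le ({A, B} : Finset (Set (ℝ × ℝ))) (Z'.filter (fun R => p ∈ R))
    have h4 : ({A, B} : Finset (Set (ℝ × ℝ))).card ≤ 2 := Finset.card_le_two
    have h5 := Finset.card_filter_add_card_filter_not (s := Z) (fun R => p ∈ R)
    simp only [memb]
    omega
  refine ⟨fun Z' h1 h2 p _ => main Z' h1 h2 p, ?_⟩
  have hnonempty : {m : ℕ | ∃ G ⊆ H, IsCover S G ∧ membS S' G = m}.Nonempty :=
    ⟨_, Z, hZsub, hZcov, rfl⟩
  obtain ⟨G, hG, hGc, hGm⟩ := Nat.sInf_mem hnonempty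
  have : optMemb S S' H = membS S' G := hGm.symm
  rw [this]
  refine Finset.sup_le fun p hp => (main G hG hGc p).trans ?_
  have : memb p G ≤ membS S' G := Finset.le_sup (f := fun p => memb p G) hp
  omega
end

section
/- Let S be a finite set of points in ℝ², let 𝒬 be a finite set of unit squares with S ⊆ ⋃𝒬, and let c ≥ 1 be a real number. For each unit-grid cell □ = [i, i+1) × [j, j+1) (i, j ∈ ℤ), set S_□ = S ∩ □ and 𝒬_□ = {Q ∈ 𝒬 : Q ∩ □ ≠ ∅}, and suppose 𝒬*_□ ⊆ 𝒬_□ is a set cover of S_□ with |𝒬*_□| ≤ c · min{|ℛ| : ℛ ⊆ 𝒬_□ is a set cover of S_□}. Then ply(⋃_□ 𝒬*_□) ≤ 36c · min{ply(ℛ) : ℛ ⊆ 𝒬 is a set cover of S}. -/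
open scoped Classical

/-- The ply of a finite family of subsets of the plane: the maximum, over all points
of the plane, of the number of members containing the point. -/
noncomputable def ply (F : Finset (Set (ℝ × ℝ))) : ℕ :=
  sSup (Set.range fun p : ℝ × ℝ => memb p F)

theorem memb_le_ply (p : ℝ × ℝ) (F : Finset (Set (ℝ × ℝ))) : memb p F ≤ ply F := by
  apply le_csSup
  · refine ⟨F.card, ?_⟩
    rintro _ ⟨q, rfl⟩
    exact Finset.card_filter_le _ _
  · exact ⟨p, rfl⟩

theorem local_card (G : Finset (Set (ℝ × ℝ))) (hsq : ∀ R ∈ G, ∃ a b : ℝ, R = unitSquare a b)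
    (i j : ℤ) : (G.filter (fun R => (R ∩ gridCell i j).Nonempty)).card ≤ 4 * ply G := by
  have hs : G.filter (fun R => (R ∩ gridCell i j).Nonempty) ⊆
      ((G.filter (fun R => ((i : ℝ), (j : ℝ)) ∈ R)) ∪ (G.filter (fun R => ((i : ℝ) + 1, (j : ℝ)) ∈ R)))
      ∪ ((G.filter (fun R => ((i : ℝ), (j : ℝ) + 1) ∈ R)) ∪
        (G.filter (fun R => ((i : ℝ) + 1, (j : ℝ) + 1) ∈ R))) := by
    intro R hR
    obtain ⟨hRG, q, hq1, hq2⟩ := Finset.mem_filter.1 hR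
    obtain ⟨a, b, rfl⟩ := hsq R hRG
    obtain ⟨h1, h2, h3, h4⟩ := hq1
    obtain ⟨g1, g2, g3, g4⟩ := hq2
    simp only [Finset.mem_union, Finset.mem_filter, hRG, true_and]
    simp only [unitSquare, Set.mem_setOf_eq]
    rcases le_or_gt a i with ha | ha <;> rcases le_or_gt b j with hb | hb
    · left; left; refine ⟨?_, ?_, ?_, ?_⟩ <;> linarith
    · right; left; refine ⟨?_, ?_, ?_, ?_⟩ <;> linarith
    · left; right; refine ⟨?_, ?_, ?_, ?_⟩ <;> linarith
    · right; right; refine ⟨?_, ?_, ?_, ?_⟩ <;> linarith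
  have h0 := Finset.card_le_card hs
  have h1 := memb_le_ply ((i : ℝ), (j : ℝ)) G
  have h2 := memb_le_ply ((i : ℝ) + 1, (j : ℝ)) G
  have h3 := memb_le_ply ((i : ℝ), (j : ℝ) + 1) G
  have h4 := memb_le_ply ((i : ℝ) + 1, (j : ℝ) + 1) G
  unfold memb at h1 h2 h3 h4
  refine h0.trans ((Finset.card_union_le _ _).trans ?_)
  refine (add_le_add (Finset.card_union_le _ _) (Finset.card_union_le _ _)).trans ?_
  omega

theorem near_cell {a x y : ℝ} {i : ℤ} (h1 : a ≤ x) (h2 : x ≤ a + 1) (h3 : a ≤ y) (h4 : y ≤ a + 1)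
    (h5 : (i : ℝ) ≤ y) (h6 : y < (i : ℝ) + 1) : i ∈ Finset.Icc (⌊x⌋ - 1) (⌊x⌋ + 1) := by
  have f1 := Int.floor_le x
  have f2 := Int.lt_floor_add_one x
  rw [Finset.mem_Icc]
  constructor
  · have : ((⌊x⌋ : ℤ) : ℝ) < ((i + 2 : ℤ) : ℝ) := by push_cast; linarith
    have := Int.cast_lt.1 this
    omega
  · have : (i : ℝ) < ((⌊x⌋ + 2 : ℤ) : ℝ) := by push_cast; linarith
    have := Int.cast_lt.1 this
    omega

theorem stmt14 (S : Finset (ℝ × ℝ)) (Q : Finset (Set (ℝ × ℝ)))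
    (hsq : ∀ R ∈ Q, ∃ a b : ℝ, R = unitSquare a b)
    (hcov : IsCover S Q) (c : ℝ) (hc : 1 ≤ c)
    (Qstar : ℤ → ℤ → Finset (Set (ℝ × ℝ)))
    (hsub : ∀ i j : ℤ, Qstar i j ⊆ Q.filter (fun R => (R ∩ gridCell i j).Nonempty))
    (hcovloc : ∀ i j : ℤ, IsCover (S.filter (fun p => p ∈ gridCell i j)) (Qstar i j))
    (hsize : ∀ i j : ℤ, ((Qstar i j).card : ℝ) ≤
      c * (sInf {n : ℕ | ∃ G ⊆ Q.filter (fun R => (R ∩ gridCell i j).Nonempty),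
            IsCover (S.filter (fun p => p ∈ gridCell i j)) G ∧ G.card = n} : ℕ)) :
    (ply (Q.filter (fun R => ∃ i j : ℤ, R ∈ Qstar i j)) : ℝ) ≤
      36 * c * (sInf {n : ℕ | ∃ G ⊆ Q, IsCover S G ∧ ply G = n} : ℕ) := by
  obtain ⟨G, hGQ, hGc, hGp⟩ := Nat.sInf_mem
    (s := {n : ℕ | ∃ G ⊆ Q, IsCover S G ∧ ply G = n}) ⟨_, Q, subset_rfl, hcov, rfl⟩
  rw [← hGp]
  have hloc : ∀ i j : ℤ, ((Qstar i j).card : ℝ) ≤ c * (4 * (ply G : ℝ)) := by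
    intro i j
    refine (hsize i j).trans ?_
    apply mul_le_mul_of_nonneg_left _ (by linarith)
    have h1 := local_card G (fun R hR => hsq R (hGQ hR)) i j
    have h2 : sInf {n : ℕ | ∃ G ⊆ Q.filter (fun R => (R ∩ gridCell i j).Nonempty),
            IsCover (S.filter (fun p => p ∈ gridCell i j)) G ∧ G.card = n} ≤
        (G.filter (fun R => (R ∩ gridCell i j).Nonempty)).card := by
      apply Nat.sInf_le
      refine ⟨_, Finset.filter_subset_filter _ hGQ, ?_, rfl⟩
      intro p hp
      obtain ⟨hpS, hpc⟩ := Finset.mem_filter.1 hp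
      obtain ⟨R, hR, hpR⟩ := hGc p hpS
      exact ⟨R, Finset.mem_filter.2 ⟨hR, p, hpR, hpc⟩, hpR⟩
    exact_mod_cast h2.trans h1
  obtain ⟨p, hp⟩ := Nat.sSup_mem
    (s := Set.range fun p : ℝ × ℝ => memb p (Q.filter (fun R => ∃ i j : ℤ, R ∈ Qstar i j)))
    ⟨_, (0, 0), rfl⟩ ⟨(Q.filter (fun R => ∃ i j : ℤ, R ∈ Qstar i j)).card, by
      rintro _ ⟨q, rfl⟩
      exact Finset.card_filter_le _ _⟩
  unfold ply at hloc ⊢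
  rw [← hp]
  set T := Finset.Icc (⌊p.1⌋ - 1) (⌊p.1⌋ + 1) ×ˢ Finset.Icc (⌊p.2⌋ - 1) (⌊p.2⌋ + 1) with hT
  have hTc : T.card = 9 := by
    rw [hT, Finset.card_product, Int.card_Icc, Int.card_Icc]
    have h1 : (⌊p.1⌋ + 1 + 1 - (⌊p.1⌋ - 1)).toNat = 3 := by omega
    have h2 : (⌊p.2⌋ + 1 + 1 - (⌊p.2⌋ - 1)).toNat = 3 := by omega
    rw [h1, h2]
  have hsubT : (Q.filter (fun R => ∃ i j : ℤ, R ∈ Qstar i j)).filter (fun R => p ∈ R) ⊆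
      T.biUnion (fun t => Qstar t.1 t.2) := by
    intro R hR
    obtain ⟨hR1, hpR⟩ := Finset.mem_filter.1 hR
    obtain ⟨hRQ, i, j, hij⟩ := Finset.mem_filter.1 hR1
    obtain ⟨-, q, hq1, hq2⟩ := Finset.mem_filter.1 (hsub i j hij)
    obtain ⟨a, b, rfl⟩ := hsq R hRQ
    obtain ⟨h1, h2, h3, h4⟩ := hq1
    obtain ⟨g1, g2, g3, g4⟩ := hq2
    obtain ⟨k1, k2, k3, k4⟩ := hpR
    refine Finset.mem_biUnion.2 ⟨(i, j), ?_, hij⟩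
    rw [hT]
    exact Finset.mem_product.2 ⟨near_cell k1 k2 h1 h2 g1 g2, near_cell k3 k4 h3 h4 g3 g4⟩
  have hcard := (Finset.card_le_card hsubT).trans Finset.card_biUnion_le
  have hcard' : (memb p (Q.filter (fun R => ∃ i j : ℤ, R ∈ Qstar i j)) : ℝ) ≤
      ∑ t ∈ T, ((Qstar t.1 t.2).card : ℝ) := by
    unfold memb
    exact_mod_cast hcard
  refine hcard'.trans ((Finset.sum_le_card_nsmul T _ _ (fun t _ => hloc t.1 t.2)).trans ?_)
  rw [hTc, nsmul_eq_mul]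
  apply le_of_eq
  push_cast
  ring
end
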